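/- Extended Markov's Theorem: if the discrete Sobolev inner product ⟨·,·⟩ is sequentially-ordered and μ belongs to the Nevai class M(0,1), then for every k ≥ 1 the rational functions R_n^{[k]} = S_n^{[k]}/S_{n+k} converge, uniformly on every compact subset of Ω_∞* = (ℂ̄ ∖ [−1,1]) ∖ {c_1,…,c_N}, to the kth Markov-type function μ̂_k(z) = ∫_{−1}^{1} Q_{k−1}(x)/(z−x) dμ_ρ(x) as n → ∞. -/

import Mathlib

open MeasureTheory Polynomial Filter
open scoped Classical

noncomputable section

/-- The discrete Sobolev inner product with a single derivative order `d j` at each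
mass point `c j`, with weight `η j`. -/
def sobInner (μ : Measure ℝ) {N : ℕ} (c : Fin N → ℝ) (d : Fin N → ℕ) (η : Fin N → ℝ)
    (f g : Polynomial ℝ) : ℝ :=
  (∫ x in Set.Icc (-1:ℝ) 1, f.eval x * g.eval x ∂μ) +
    ∑ j, η j * ((derivative^[d j] f).eval (c j)) * ((derivative^[d j] g).eval (c j))

/-- The general discrete Sobolev inner product with weights `η j i` for the `i`-th
derivatives, `0 ≤ i ≤ d j`, at each mass point `c j`. -/
def sobInner2 (μ : Measure ℝ) {N : ℕ} (c : Fin N → ℝ) (d : Fin N → ℕ) (η : Fin N → ℕ → ℝ)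
    (f g : Polynomial ℝ) : ℝ :=
  (∫ x in Set.Icc (-1:ℝ) 1, f.eval x * g.eval x ∂μ) +
    ∑ j, ∑ i ∈ Finset.range (d j + 1),
      η j i * ((derivative^[i] f).eval (c j)) * ((derivative^[i] g).eval (c j))

/-- Sequential order for the data of a discrete Sobolev inner product:
`d` is nondecreasing and each `c k` lies outside the convex hull of
`(-1,1) ∪ {c 1, …, c (k-1)}`. -/
def SeqOrdered {N : ℕ} (c : Fin N → ℝ) (d : Fin N → ℕ) : Prop :=
  (∀ i j : Fin N, i ≤ j → d i ≤ d j) ∧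
    ∀ k : Fin N, c k ∉ convexHull ℝ (Set.Ioo (-1:ℝ) 1 ∪ c '' {j : Fin N | j < k})

/-- The polynomial ρ(x) = ∏_{c j < -1} (x - c j)^(d j + 1) · ∏_{c j > 1} (c j - x)^(d j + 1). -/
def rhoPoly {N : ℕ} (c : Fin N → ℝ) (d : Fin N → ℕ) : Polynomial ℝ :=
  (∏ j ∈ Finset.univ.filter (fun j => c j < -1), (X - C (c j)) ^ (d j + 1)) *
    ∏ j ∈ Finset.univ.filter (fun j => (1:ℝ) < c j), (C (c j) - X) ^ (d j + 1)

/-- ν = number of mass points greater than 1. -/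
def nuCount {N : ℕ} (c : Fin N → ℝ) : ℕ :=
  (Finset.univ.filter (fun j : Fin N => (1:ℝ) < c j)).card

/-- μ belongs to the Nevai class M(0,1): supp μ = [-1,1] and the monic orthogonal
polynomials of μ satisfy a three-term recurrence with aₙ → 1/2 and bₙ → 0. -/
def NevaiClass (μ : Measure ℝ) : Prop :=
  μ (Set.Icc (-1:ℝ) 1)ᶜ = 0 ∧
  (∀ x ∈ Set.Icc (-1:ℝ) 1, ∀ ε > 0, 0 < μ (Metric.ball x ε)) ∧
  ∃ (P : ℕ → Polynomial ℝ) (a b : ℕ → ℝ),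
    (∀ n, (P n).Monic) ∧ (∀ n, (P n).natDegree = n) ∧
    (∀ n, ∀ m < n, (∫ x in Set.Icc (-1:ℝ) 1, x ^ m * (P n).eval x ∂μ) = 0) ∧
    P 0 = 1 ∧ P 1 = X - C (b 0) ∧
    (∀ n, P (n + 2) = (X - C (b (n + 1))) * P (n + 1) - C ((a (n + 1)) ^ 2) * P n) ∧
    Tendsto a atTop (nhds (1 / 2)) ∧ Tendsto b atTop (nhds 0)

/-- The segment [-1,1] regarded as a subset of ℂ. -/
def segIcc : Set ℂ := Complex.ofReal '' Set.Icc (-1:ℝ) 1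

/-- Markov-type function: z ↦ ∫ q(x) / (z - x) w(x) dμ(x). -/
def markovHat (μ : Measure ℝ) (w q : Polynomial ℝ) (z : ℂ) : ℂ :=
  ∫ x in Set.Icc (-1:ℝ) 1, ((q.eval x * w.eval x : ℝ) : ℂ) / (z - (x : ℂ)) ∂μ

/-- Associated function: z ↦ ∫ (p(z) - p(x)) / (z - x) · q(x) w(x) dμ(x). -/
def assocFun (μ : Measure ℝ) (w q p : Polynomial ℝ) (z : ℂ) : ℂ :=
  ∫ x in Set.Icc (-1:ℝ) 1,
    ((aeval z p - ((p.eval x : ℝ) : ℂ)) / (z - (x : ℂ))) * ((q.eval x * w.eval x : ℝ) : ℂ) ∂μ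

/-- A function changes sign at `t` if arbitrarily close to `t`, on the left and right,
it takes values of opposite signs. -/
def SignChangeAt (p : Polynomial ℝ) (t : ℝ) : Prop :=
  ∀ δ > 0, ∃ x ∈ Set.Ioo (t - δ) t, ∃ y ∈ Set.Ioo t (t + δ), p.eval x * p.eval y < 0

/-- N₀(f; A): number of zeros of `f` in `A`, counted with multiplicity. -/
def N0 (f : Polynomial ℝ) (A : Set ℝ) : ℕ :=
  (f.roots.filter (fun x => x ∈ A)).card

/-!
Let `P n` be the monic orthogonal polynomials of `μ` and `‖·‖` the norm of `L²(μ)`. Off `[-1, 1]`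
the remainder `markovHat - R_n` is a Markov function of `S n * q` divided by `S n (z)`, and its
numerator is `O(‖S n‖)`. By extremality of `S n`, tested on `∏ (x - cⱼ)^(dⱼ+1) * P (n - D)`, both
`‖S n‖` and the derivatives of `S n` entering the inner product are `O(‖P (n - D)‖)`, which is
`o(P n (z))` off `[-1, 1]`.

It remains to bound `S n (z)` from below by `P n (z)`. By Rolle's theorem, sequential order yields
polynomials vanishing at the masses which follow a given sign pattern at the zeros of `P n` and
have degree at most `N` more than its number of changes. Gauss quadrature at those zeros therefore
forces `S n` to have zeros in all but at most `N` of the cells between consecutive zeros of `P n`,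
the last cell ending at `1`. So `S n = q * r` with `|P n| = O(|q|)` off the segment and `deg r ≤ N`.
If `r` had no zero near `c j`, then the dominant Leibniz term of the `d j`-th derivative of `q * r`
at `c j` would be the one leaving `r` alone, and `P n (c j)` would be `O(‖P (n - D)‖)`, which is too
small. Hence each `c j` attracts one of the at most `N` zeros of `r`, and away from the `c j` the
factor `r` is bounded below.
-/

/-! ### Orthogonal polynomials of a positive definite moment functional -/

section MomentFunctional

variable {ι : Type*} {L : ℝ[X] →ₗ[ℝ] ℝ} {a b : ℝ} {n : ℕ} {P : ℝ[X]}

lemma map_eq_zero_of_map_X_pow_eq_zero (Λ : ℝ[X] →ₗ[ℝ] ℝ) (h : ∀ m < n, Λ (X ^ m) = 0)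
    {f : ℝ[X]} (hf : f.degree < n) : Λ f = 0 := by
  rw [← mem_degreeLT, degreeLT_eq_span_X_pow, Finset.coe_image, Finset.coe_range] at hf
  have hspan : Submodule.span ℝ ((fun m => (X : ℝ[X]) ^ m) '' Set.Iio n) ≤ LinearMap.ker Λ :=
    Submodule.span_le.2 (Set.image_subset_iff.2 h)
  exact hspan hf

lemma exists_ne_zero_degree_lt_forall_map_eq_zero [Fintype ι] (φ : ι → ℝ[X] →ₗ[ℝ] ℝ) {s : ℕ}
    (hs : Fintype.card ι < s) : ∃ p : ℝ[X], p ≠ 0 ∧ p.degree < s ∧ ∀ i, φ i p = 0 := by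
  obtain ⟨p, hp, hp0⟩ := (Submodule.ne_bot_iff _).1 <| LinearMap.ker_ne_bot_of_finrank_lt
    (f := (LinearMap.pi φ).comp (degreeLT ℝ s).subtype)
    (by simpa [(degreeLTEquiv ℝ s).finrank_eq] using hs)
  exact ⟨p, by simpa using hp0, mem_degreeLT.1 p.2, congrFun (LinearMap.mem_ker.1 hp)⟩

/-- `L` is a positive definite moment functional: the form `(p, q) ↦ L (p * q)` is an inner
product on real polynomials. -/
def PosDefFunctional (L : ℝ[X] →ₗ[ℝ] ℝ) : Prop :=
  ∀ p, p ≠ 0 → 0 < L (p ^ 2)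

/-- `L` is a positive functional on the polynomials regarded as functions on `[a, b]`. -/
def NonnegOnIcc (L : ℝ[X] →ₗ[ℝ] ℝ) (a b : ℝ) : Prop :=
  ∀ p : ℝ[X], (∀ x ∈ Set.Icc a b, 0 ≤ p.eval x) → 0 ≤ L p

/-- `P` is the `n`-th monic orthogonal polynomial of the moment functional `L`. -/
structure IsMonicOrthogonal (L : ℝ[X] →ₗ[ℝ] ℝ) (n : ℕ) (P : ℝ[X]) : Prop where
  monic : P.Monic
  natDegree_eq : P.natDegree = n
  map_mul_eq_zero : ∀ f : ℝ[X], f.degree < n → L (f * P) = 0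

lemma PosDefFunctional.map_sq_nonneg (hL : PosDefFunctional L) (p : ℝ[X]) : 0 ≤ L (p ^ 2) := by
  rcases eq_or_ne p 0 with rfl | hp
  · simp
  · exact (hL p hp).le

lemma PosDefFunctional.exists_isMonicOrthogonal (hL : PosDefFunctional L) (n : ℕ) :
    ∃ P, IsMonicOrthogonal L n P := by
  obtain ⟨p, hp0, hdeg, hp⟩ := exists_ne_zero_degree_lt_forall_map_eq_zero
    (fun m : Fin n => L.comp (LinearMap.mulLeft ℝ ((X : ℝ[X]) ^ (m : ℕ)))) (s := n + 1) (by simp)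
  have horth {f : ℝ[X]} (hf : f.degree < n) : L (f * p) = 0 :=
    map_eq_zero_of_map_X_pow_eq_zero (L.comp (LinearMap.mulRight ℝ p))
      (fun m hm => hp ⟨m, hm⟩) hf
  have hnot : ¬ p.degree < n := fun h => (hL p hp0).ne' (by rw [sq, horth h])
  have hnat : p.natDegree = n := by
    rw [degree_eq_natDegree hp0, Nat.cast_lt] at hnot hdeg
    omega
  refine ⟨p * C p.leadingCoeff⁻¹, monic_mul_leadingCoeff_inv hp0, ?_, fun f hf => ?_⟩
  · rw [natDegree_mul_leadingCoeff_inv p hp0, hnat]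
  · rw [← mul_assoc, mul_comm, ← smul_eq_C_mul, map_smul, horth hf, smul_zero]

namespace IsMonicOrthogonal

lemma map_mul_sq_eq_zero_of_eq_mul (hP : IsMonicOrthogonal L n P) {V W : ℝ[X]} (h : P = W * V)
    (hW : 0 < W.natDegree) : V ≠ 0 ∧ L (W * V ^ 2) = 0 := by
  have hWV : W * V ≠ 0 := h ▸ hP.monic.ne_zero
  have hV : V ≠ 0 := right_ne_zero_of_mul hWV
  refine ⟨hV, ?_⟩
  have hdeg : V.degree < n := by
    rw [← natDegree_lt_iff_degree_lt hV, ← hP.natDegree_eq, h,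
      natDegree_mul (left_ne_zero_of_mul hWV) hV]
    omega
  rw [← hP.map_mul_eq_zero V hdeg, h]
  ring_nf

lemma im_eq_zero_of_aeval_eq_zero (hP : IsMonicOrthogonal L n P) (hL : PosDefFunctional L) {z : ℂ}
    (hz : aeval z P = 0) : z.im = 0 := by
  by_contra him
  obtain ⟨V, hV⟩ := P.quadratic_dvd_of_aeval_eq_zero_im_ne_zero hz him
  obtain ⟨hV0, hLV⟩ := hP.map_mul_sq_eq_zero_of_eq_mul hV (by
    have : (X ^ 2 - C (2 * z.re) * X + C (‖z‖ ^ 2) : ℝ[X]).natDegree = 2 := by compute_degree!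
    omega)
  have hsq : (X ^ 2 - C (2 * z.re) * X + C (‖z‖ ^ 2)) * V ^ 2 =
      ((X - C z.re) * V) ^ 2 + z.im ^ 2 • V ^ 2 := by
    rw [← Complex.normSq_eq_norm_sq, Complex.normSq_apply, smul_eq_C_mul]
    simp only [map_add, map_mul, map_pow, map_ofNat]
    ring
  rw [hsq, map_add, map_smul, smul_eq_mul] at hLV
  have hpos : 0 < z.im ^ 2 * L (V ^ 2) := mul_pos (by positivity) (hL V hV0)
  linarith [hL.map_sq_nonneg ((X - C z.re) * V)]

lemma splits (hP : IsMonicOrthogonal L n P) (hL : PosDefFunctional L) : P.Splits := by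
  refine Splits.of_splits_map_of_injective (algebraMap ℝ ℂ).injective (IsAlgClosed.splits _) ?_
  intro z hz
  have hz0 : aeval z P = 0 := (mem_aroots.1 hz).2
  exact ⟨z.re, Complex.ext rfl (hP.im_eq_zero_of_aeval_eq_zero hL hz0).symm⟩

lemma nodup_roots (hP : IsMonicOrthogonal L n P) (hL : PosDefFunctional L) : P.roots.Nodup := by
  refine Multiset.nodup_iff_count_le_one.2 fun y => not_lt.1 fun hy => ?_
  rw [count_roots, Nat.lt_iff_add_one_le, le_rootMultiplicity_iff hP.monic.ne_zero] at hy
  obtain ⟨V, hV⟩ := hy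
  obtain ⟨hV0, hLV⟩ := hP.map_mul_sq_eq_zero_of_eq_mul hV (by simp)
  rw [← mul_pow] at hLV
  exact (hL _ (mul_ne_zero (X_sub_C_ne_zero y) hV0)).ne' hLV

-- If `y` were outside `(a, b)`, then `x - y` would have a fixed sign on `[a, b]`; comparison with
-- the square `(x - e)²`, `e` an endpoint, turns `L ((X - y) V²) = 0` into a contradiction.
lemma mem_Ioo_of_isRoot (hP : IsMonicOrthogonal L n P) (hL : PosDefFunctional L)
    (hab : NonnegOnIcc L a b) {y : ℝ} (hy : P.IsRoot y) : y ∈ Set.Ioo a b := by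
  obtain ⟨V, hV⟩ := dvd_iff_isRoot.2 hy
  obtain ⟨hV0, hLV⟩ := hP.map_mul_sq_eq_zero_of_eq_mul hV (by simp)
  have not_dominates (e r : ℝ) : ¬ ∀ x ∈ Set.Icc a b, (x - e) ^ 2 ≤ r * (x - y) := by
    intro h
    have hnonneg : 0 ≤ L (r • ((X - C y) * V ^ 2) - ((X - C e) * V) ^ 2) :=
      hab _ fun x hx => by
        have := mul_le_mul_of_nonneg_right (h x hx) (sq_nonneg (V.eval x))
        simp only [eval_sub, eval_smul, eval_mul, eval_pow, eval_X, eval_C, smul_eq_mul]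
        linarith
    rw [map_sub, map_smul, hLV, smul_zero] at hnonneg
    linarith [hL _ (mul_ne_zero (X_sub_C_ne_zero e) hV0)]
  refine ⟨lt_of_not_ge fun hya => not_dominates a (b - a) fun x hx => ?_,
    lt_of_not_ge fun hby => not_dominates b (a - b) fun x hx => ?_⟩
  · nlinarith [hx.1, hx.2]
  · nlinarith [hx.1, hx.2]

end IsMonicOrthogonal

/-- `y 0 < ⋯ < y (n - 1)` are the zeros of the monic polynomial `P` of degree `n`, all of them
simple and in `(a, b)`; the right endpoint is appended as `y n = b`, so that the cells between
consecutive zeros are `(y i, y (i + 1))` for `i < n`. -/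
structure SortedZeros (P : ℝ[X]) (n : ℕ) (a b : ℝ) (y : ℕ → ℝ) : Prop where
  eq_nodal : P = Lagrange.nodal (Finset.range n) y
  lt_zero : ∀ i < n, a < y i
  last : y n = b
  strictMonoOn : StrictMonoOn y (Set.Iic n)

lemma IsMonicOrthogonal.exists_sortedZeros (hP : IsMonicOrthogonal L n P)
    (hL : PosDefFunctional L) (hab : NonnegOnIcc L a b) : ∃ y, SortedZeros P n a b y := by
  have hnodup := hP.nodup_roots hL
  have hcard : P.roots.toFinset.card = n := by
    rw [Multiset.toFinset_card_of_nodup hnodup, ← (hP.splits hL).natDegree_eq_card_roots,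
      hP.natDegree_eq]
  set e := P.roots.toFinset.orderEmbOfFin hcard with he
  set y : ℕ → ℝ := fun i => if h : i < n then e ⟨i, h⟩ else b with hy
  have hyi (i : ℕ) (h : i < n) : y i = e ⟨i, h⟩ := dif_pos h
  have hlast : y n = b := dif_neg (lt_irrefl n)
  have hmem (i : ℕ) (h : i < n) : y i ∈ Set.Ioo a b := by
    have := Finset.orderEmbOfFin_mem P.roots.toFinset hcard ⟨i, h⟩
    rw [hyi i h]
    exact hP.mem_Ioo_of_isRoot hL hab (isRoot_of_mem_roots (Multiset.mem_toFinset.1 this))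
  refine ⟨y, ?_, fun i h => (hmem i h).1, hlast, fun i _ j hj hij => ?_⟩
  · rw [Lagrange.nodal, Finset.prod_range]
    simp only [hyi _ (Fin.is_lt _), Fin.eta]
    rw [← Finset.prod_image (s := Finset.univ) (f := fun x => X - C x) (g := e)
        e.injective.injOn,
      Finset.image_orderEmbOfFin_univ, Finset.prod_eq_multiset_prod, Multiset.toFinset_val,
      hnodup.dedup]
    exact (hP.splits hL).eq_prod_roots_of_monic hP.monic
  · rcases (Set.mem_Iic.1 hj).eq_or_lt with rfl | hjn
    · exact hlast ▸ (hmem i hij).2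
    · rw [hyi i (hij.trans hjn), hyi j hjn]
      exact e.strictMono hij

namespace SortedZeros

variable {y : ℕ → ℝ}

lemma lt (hy : SortedZeros P n a b y) {i j : ℕ} (hij : i < j) (hj : j ≤ n) : y i < y j :=
  hy.strictMonoOn (hij.le.trans hj) hj hij

lemma lt_right (hy : SortedZeros P n a b y) {i : ℕ} (hi : i < n) : y i < b :=
  hy.last ▸ hy.lt hi le_rfl

lemma mem_Ioo (hy : SortedZeros P n a b y) {i : ℕ} (hi : i < n) : y i ∈ Set.Ioo a b :=
  ⟨hy.lt_zero i hi, hy.lt_right hi⟩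

lemma injOn (hy : SortedZeros P n a b y) : Set.InjOn y (Finset.range n) :=
  hy.strictMonoOn.injOn.mono fun _ hi => (Finset.mem_range.1 hi).le

end SortedZeros

section GaussQuadrature

variable [DecidableEq ι] {s : Finset ι} {v : ι → ℝ}

lemma IsMonicOrthogonal.gauss_quadrature (hP : IsMonicOrthogonal L s.card (Lagrange.nodal s v))
    (hv : Set.InjOn v s) {f : ℝ[X]} (hf : f.degree < (2 * s.card : ℕ)) :
    L f = ∑ i ∈ s, L (Lagrange.basis s v i) * f.eval (v i) := by
  set P := Lagrange.nodal s v with hPdef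
  have hquot : L (f /ₘ P * P) = 0 := by
    refine hP.map_mul_eq_zero _ ?_
    rcases eq_or_ne (f /ₘ P) 0 with h0 | h0
    · rw [h0, degree_zero]
      exact WithBot.bot_lt_coe _
    have hf0 : f ≠ 0 := by
      rintro rfl
      simp at h0
    rw [← natDegree_lt_iff_degree_lt hf0] at hf
    rw [← natDegree_lt_iff_degree_lt h0, natDegree_divByMonic _ hP.monic, hP.natDegree_eq]
    omega
  have hrem : f %ₘ P = Lagrange.interpolate s v fun i => f.eval (v i) := by
    refine Lagrange.eq_interpolate_of_eval_eq _ hv ?_ fun i hi => ?_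
    · rw [← Lagrange.degree_nodal (R := ℝ) (v := v)]
      exact degree_modByMonic_lt _ hP.monic
    · conv_rhs => rw [← modByMonic_add_div f P]
      rw [eval_add, eval_mul, hPdef, Lagrange.eval_nodal_at_node hi, zero_mul, add_zero]
  calc L f = L (f %ₘ P) + L (f /ₘ P * P) := by
        rw [← map_add, mul_comm, modByMonic_add_div]
    _ = _ := by
        rw [hquot, hrem, add_zero, Lagrange.interpolate_apply, map_sum]
        refine Finset.sum_congr rfl fun i _ => ?_
        rw [← smul_eq_C_mul, map_smul, smul_eq_mul, mul_comm]

lemma IsMonicOrthogonal.map_basis_pos (hP : IsMonicOrthogonal L s.card (Lagrange.nodal s v))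
    (hL : PosDefFunctional L) (hv : Set.InjOn v s) {i : ι} (hi : i ∈ s) :
    0 < L (Lagrange.basis s v i) := by
  have hne := Lagrange.basis_ne_zero hv hi
  have hcard : 0 < s.card := Finset.card_pos.2 ⟨i, hi⟩
  have hdeg : (Lagrange.basis s v i ^ 2).degree < (2 * s.card : ℕ) := by
    rw [← natDegree_lt_iff_degree_lt (pow_ne_zero 2 hne), natDegree_pow,
      Lagrange.natDegree_basis hv hi]
    omega
  have hquad := hP.gauss_quadrature hv hdeg
  rw [Finset.sum_eq_single_of_mem i hi, eval_pow, Lagrange.eval_basis_self hv hi, one_pow,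
    mul_one] at hquad
  · exact hquad ▸ hL _ hne
  · intro j hj hji
    rw [eval_pow, Lagrange.eval_basis_of_ne hji.symm hj, zero_pow two_ne_zero, mul_zero]

lemma eq_sum_smul_nodal_erase (hv : Set.InjOn v s) {f : ℝ[X]} (hf : f.degree < s.card) :
    f = ∑ i ∈ s, (Lagrange.nodalWeight s v i * f.eval (v i)) • Lagrange.nodal (s.erase i) v := by
  conv_lhs => rw [Lagrange.eq_interpolate hv hf,
    Lagrange.interpolate_eq_nodalWeight_mul_nodal_div_X_sub_C]
  refine Finset.sum_congr rfl fun i hi => ?_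
  rw [Lagrange.nodal_erase_eq_nodal_div hi, smul_eq_C_mul, map_mul]
  ring

lemma sum_nodalWeight_mul_eval (hv : Set.InjOn v s) {f : ℝ[X]} (hf : f.degree < s.card) :
    ∑ i ∈ s, Lagrange.nodalWeight s v i * f.eval (v i) = f.coeff (s.card - 1) := by
  rw [Lagrange.coeff_eq_sum hv hf]
  refine Finset.sum_congr rfl fun i _ => ?_
  rw [Lagrange.nodalWeight, Finset.prod_inv_distrib, div_eq_inv_mul]

lemma IsMonicOrthogonal.map_mul_eq_coeff_mul (hP : IsMonicOrthogonal L n P) {f : ℝ[X]}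
    (hf : f.natDegree ≤ n) : L (f * P) = f.coeff n * L (P ^ 2) := by
  have hdeg : (f - f.coeff n • P).degree < n := by
    refine (degree_lt_iff_coeff_zero _ _).2 fun m hm => ?_
    have hPn : P.coeff n = 1 := hP.natDegree_eq ▸ hP.monic.coeff_natDegree
    rcases hm.eq_or_lt with rfl | hlt
    · rw [coeff_sub, coeff_smul, hPn, smul_eq_mul, mul_one, sub_self]
    · rw [coeff_sub, coeff_smul, coeff_eq_zero_of_natDegree_lt (hf.trans_lt hlt),
        coeff_eq_zero_of_natDegree_lt (hP.natDegree_eq.trans_lt hlt), smul_zero, sub_zero]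
  have horth := hP.map_mul_eq_zero _ hdeg
  rw [sub_mul, smul_mul_assoc, map_sub, map_smul, ← sq, sub_eq_zero, smul_eq_mul] at horth
  exact horth

-- Quadrature and orthogonality evaluate `L (ℓᵢ P)` as `L (ℓᵢ) P(vᵢ)` and as a multiple of
-- `L (P²)` by the leading coefficient of `ℓᵢ`, which is the nodal weight.
lemma IsMonicOrthogonal.nodalWeight_mul_eval_nonneg (hP : IsMonicOrthogonal L n P)
    (hs : s.card = n + 1) (hQ : IsMonicOrthogonal L s.card (Lagrange.nodal s v))
    (hL : PosDefFunctional L) (hv : Set.InjOn v s) {i : ι} (hi : i ∈ s) :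
    0 ≤ Lagrange.nodalWeight s v i * P.eval (v i) := by
  set ℓ := Lagrange.basis s v i
  have hnat : ℓ.natDegree = n := by rw [Lagrange.natDegree_basis hv hi, hs, Nat.add_sub_cancel]
  have hlead : ℓ.coeff n = Lagrange.nodalWeight s v i := by
    rw [← hnat, coeff_natDegree, Lagrange.leadingCoeff_basis hv hi, Lagrange.nodalWeight,
      Finset.prod_inv_distrib]
  have hne := mul_ne_zero (Lagrange.basis_ne_zero hv hi) hP.monic.ne_zero
  have hdeg : (ℓ * P).degree < (2 * s.card : ℕ) := by
    rw [← natDegree_lt_iff_degree_lt hne]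
    have : (ℓ * P).natDegree ≤ n + n :=
      natDegree_mul_le_of_le hnat.le hP.natDegree_eq.le
    exact this.trans_lt (by omega)
  have hquad : L ℓ * P.eval (v i) = Lagrange.nodalWeight s v i * L (P ^ 2) := by
    rw [← hlead, ← hP.map_mul_eq_coeff_mul hnat.le, hQ.gauss_quadrature hv hdeg,
      Finset.sum_eq_single_of_mem i hi, eval_mul, Lagrange.eval_basis_self hv hi, one_mul]
    intro j hj hji
    rw [eval_mul, Lagrange.eval_basis_of_ne hji.symm hj, zero_mul, mul_zero]
  refine nonneg_of_mul_nonneg_right ?_ (hQ.map_basis_pos hL hv hi)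
  rw [mul_left_comm, hquad, ← mul_assoc]
  exact mul_nonneg (mul_self_nonneg _) (hL.map_sq_nonneg P)

lemma IsMonicOrthogonal.norm_aeval_le_norm_aeval_succ {Q : ℝ[X]}
    (hP : IsMonicOrthogonal L n P) (hQ : IsMonicOrthogonal L (n + 1) Q)
    (hL : PosDefFunctional L) (hab : NonnegOnIcc L a b) {z : ℂ} {δ : ℝ} (hδ : 0 < δ)
    (hz : ∀ t ∈ Set.Icc a b, δ ≤ ‖z - (t : ℂ)‖) : ‖aeval z P‖ ≤ δ⁻¹ * ‖aeval z Q‖ := by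
  obtain ⟨y, hy⟩ := hQ.exists_sortedZeros hL hab
  set s := Finset.range (n + 1)
  have hcard : s.card = n + 1 := Finset.card_range _
  have hinj : Set.InjOn y s := hy.injOn
  set α : ℕ → ℝ := fun i => Lagrange.nodalWeight s y i * P.eval (y i)
  have hQ' : IsMonicOrthogonal L s.card (Lagrange.nodal s y) := by rwa [hcard, ← hy.eq_nodal]
  have hdeg : P.degree < s.card := by
    rw [hcard, ← natDegree_lt_iff_degree_lt hP.monic.ne_zero, hP.natDegree_eq]
    exact Nat.lt_succ_self n
  have hsum : ∑ i ∈ s, α i = 1 := by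
    rw [sum_nodalWeight_mul_eval hinj hdeg, hcard, Nat.add_sub_cancel, ← hP.natDegree_eq]
    exact hP.monic.coeff_natDegree
  have hterm {i : ℕ} (hi : i ∈ s) :
      ‖aeval z (Lagrange.nodal (s.erase i) y)‖ ≤ δ⁻¹ * ‖aeval z Q‖ := by
    rw [hy.eq_nodal, Lagrange.nodal_eq_mul_nodal_erase hi, map_mul, norm_mul, ← div_eq_inv_mul,
      le_div_iff₀' hδ]
    gcongr
    simpa using hz (y i) (Set.Ioo_subset_Icc_self (hy.mem_Ioo (Finset.mem_range.1 hi)))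
  calc ‖aeval z P‖ = ‖∑ i ∈ s, α i • aeval z (Lagrange.nodal (s.erase i) y)‖ := by
        conv_lhs => rw [eq_sum_smul_nodal_erase hinj hdeg, map_sum]
        simp only [map_smul, α]
    _ ≤ ∑ i ∈ s, α i * (δ⁻¹ * ‖aeval z Q‖) := norm_sum_le_of_le _ fun i hi => by
        have hα : 0 ≤ α i := hP.nodalWeight_mul_eval_nonneg hcard hQ' hL hinj hi
        rw [norm_smul, Real.norm_of_nonneg hα]
        exact mul_le_mul_of_nonneg_left (hterm hi) hα
    _ = δ⁻¹ * ‖aeval z Q‖ := by rw [← Finset.sum_mul, hsum, one_mul]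

lemma norm_aeval_le_norm_aeval_add {P : ℕ → ℝ[X]} (hP : ∀ n, IsMonicOrthogonal L n (P n))
    (hL : PosDefFunctional L) (hab : NonnegOnIcc L a b) {z : ℂ} {δ : ℝ} (hδ : 0 < δ)
    (hz : ∀ t ∈ Set.Icc a b, δ ≤ ‖z - (t : ℂ)‖) (n D : ℕ) :
    ‖aeval z (P n)‖ ≤ δ⁻¹ ^ D * ‖aeval z (P (n + D))‖ := by
  induction D with
  | zero => simp
  | succ D ih =>
    calc ‖aeval z (P n)‖ ≤ δ⁻¹ ^ D * ‖aeval z (P (n + D))‖ := ih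
      _ ≤ δ⁻¹ ^ D * (δ⁻¹ * ‖aeval z (P (n + D + 1))‖) := by
          gcongr
          exact (hP _).norm_aeval_le_norm_aeval_succ (hP _) hL hab hδ hz
      _ = _ := by rw [pow_succ, mul_assoc, add_assoc]

end GaussQuadrature

end MomentFunctional

/-! ### Counting zeros on intervals -/

section Rolle

variable {f : ℝ[X]} {I : Set ℝ} {a b c : ℝ}

lemma natDegree_derivative_eq_sub_one (f : ℝ[X]) :
    (derivative f).natDegree = f.natDegree - 1 := by
  by_cases hf : f.natDegree = 0
  · rw [derivative_of_natDegree_zero hf, natDegree_zero, hf]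
  · exact natDegree_eq_of_degree_eq_some (degree_derivative hf)

lemma natDegree_iterate_derivative_eq_sub (f : ℝ[X]) (m : ℕ) :
    (derivative^[m] f).natDegree = f.natDegree - m := by
  induction m with
  | zero => rfl
  | succ m ih =>
    rw [Function.iterate_succ_apply', natDegree_derivative_eq_sub_one, ih, Nat.sub_sub]

lemma N0_le_natDegree (f : ℝ[X]) (I : Set ℝ) : N0 f I ≤ f.natDegree :=
  (Multiset.card_le_card (Multiset.filter_le _ _)).trans (card_roots' f)

lemma card_distinct_zeros_le (hf : derivative f ≠ 0) (hI : I.OrdConnected) :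
    (f.roots.filter (· ∈ I)).toFinset.card ≤
      (((derivative f).roots.filter (· ∈ I)).toFinset \ (f.roots.filter (· ∈ I)).toFinset).card
        + 1 := by
  refine Finset.card_le_sdiff_of_interleaved fun x hx y hy hxy _ => ?_
  rw [Multiset.mem_toFinset, Multiset.mem_filter] at hx hy
  obtain ⟨t, ht, hderiv⟩ := exists_deriv_eq_zero hxy f.continuousOn
    ((isRoot_of_mem_roots hx.1).trans (isRoot_of_mem_roots hy.1).symm)
  refine ⟨t, ?_, ht⟩
  rw [Multiset.mem_toFinset, Multiset.mem_filter, mem_roots hf, IsRoot, ← f.deriv]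
  exact ⟨hderiv, hI.out hx.2 hy.2 (Set.Ioo_subset_Icc_self ht)⟩

lemma N0_le_N0_derivative_add_one (f : ℝ[X]) (hI : I.OrdConnected) :
    N0 f I ≤ N0 (derivative f) I + 1 := by
  rcases eq_or_ne (derivative f) 0 with hf | hf
  · rw [eq_C_of_derivative_eq_zero hf, N0, roots_C]
    simp
  set A := f.roots.filter (· ∈ I) with hA
  set B := (derivative f).roots.filter (· ∈ I) with hB
  have hle : A - A.dedup + (B.toFinset \ A.toFinset).val ≤ B := by
    refine Multiset.le_iff_count.2 fun x => ?_
    rw [Multiset.count_add, Multiset.count_sub]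
    by_cases hxA : x ∈ A
    · have hxI : x ∈ I := (Multiset.mem_filter.1 hxA).2
      rw [Multiset.count_eq_zero_of_notMem (a := x) (s := Finset.val _)
          (fun h => (Finset.mem_sdiff.1 h).2 (Multiset.mem_toFinset.2 hxA)),
        Multiset.count_eq_one_of_mem A.nodup_dedup (Multiset.mem_dedup.2 hxA), hA, hB,
        Multiset.count_filter_of_pos hxI, Multiset.count_filter_of_pos hxI, count_roots,
        count_roots]
      exact rootMultiplicity_sub_one_le_derivative_rootMultiplicity f x
    · have hdedup : (B.toFinset \ A.toFinset).val ≤ B :=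
        (Multiset.le_iff_subset (Finset.nodup _)).2 fun t ht =>
          Multiset.mem_toFinset.1 (Finset.mem_sdiff.1 ht).1
      rw [Multiset.count_eq_zero_of_notMem hxA, zero_tsub, zero_add]
      exact Multiset.le_iff_count.1 hdedup x
  have hcard := Multiset.card_le_card hle
  have hdistinct : A.dedup.card ≤ (B.toFinset \ A.toFinset).card + 1 :=
    card_distinct_zeros_le hf hI
  rw [Multiset.card_add, Multiset.card_sub (Multiset.dedup_le A), Finset.card_val] at hcard
  have hgoal : A.card ≤ B.card + 1 := by omega
  exact hgoal

/-- All complex zeros of the nonzero real polynomial `f` are real and lie in `I`. -/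
structure AllRootsIn (f : ℝ[X]) (I : Set ℝ) : Prop where
  ne_zero : f ≠ 0
  splits : f.Splits
  mem_of_mem_roots : ∀ t ∈ f.roots, t ∈ I

lemma allRootsIn_iff_natDegree_le_N0 (hf : f ≠ 0) : AllRootsIn f I ↔ f.natDegree ≤ N0 f I := by
  refine ⟨fun h => ?_, fun h => ?_⟩
  · rw [N0, Multiset.filter_eq_self.2 h.mem_of_mem_roots, h.splits.natDegree_eq_card_roots]
  · have hcard : f.roots.card ≤ (f.roots.filter (· ∈ I)).card := (card_roots' f).trans h
    have hfilter := Multiset.eq_of_le_of_card_le (Multiset.filter_le (· ∈ I) f.roots) hcard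
    refine ⟨hf, splits_iff_card_roots.2 ((card_roots' f).antisymm ?_),
      Multiset.filter_eq_self.1 hfilter⟩
    exact h.trans (Multiset.card_le_card (Multiset.filter_le _ _))

lemma exists_abs_eq_one_forall_mul_inv_sub (hI : I.OrdConnected) (hc : c ∉ I) :
    ∃ ε : ℝ, |ε| = 1 ∧ ∀ t ∈ I, ε * (c - t)⁻¹ = |c - t|⁻¹ := by
  by_cases h : ∃ t ∈ I, t < c
  · obtain ⟨t₀, ht₀, hlt⟩ := h
    refine ⟨1, abs_one, fun t ht => ?_⟩
    have htc : t < c := lt_of_not_ge fun hct => hc (hI.out ht₀ ht ⟨hlt.le, hct⟩)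
    rw [one_mul, abs_of_pos (sub_pos.2 htc)]
  · push Not at h
    refine ⟨-1, by simp, fun t ht => ?_⟩
    rw [abs_of_nonpos (sub_nonpos.2 (h t ht)), neg_one_mul, inv_neg]

namespace AllRootsIn

lemma derivative (hf : AllRootsIn f I) (hI : I.OrdConnected) (hdeg : f.natDegree ≠ 0) :
    AllRootsIn (derivative f) I := by
  have hne : Polynomial.derivative f ≠ 0 := fun h => hdeg (derivative_eq_zero.1 h)
  have hN0 := (allRootsIn_iff_natDegree_le_N0 hf.ne_zero).1 hf
  have hrolle := N0_le_N0_derivative_add_one f hI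
  have hlt := natDegree_derivative_lt hdeg
  exact (allRootsIn_iff_natDegree_le_N0 hne).2 (by omega)

lemma iterate_derivative (hf : AllRootsIn f I) (hI : I.OrdConnected) {m : ℕ}
    (hm : m ≤ f.natDegree) : AllRootsIn (Polynomial.derivative^[m] f) I := by
  induction m with
  | zero => exact hf
  | succ m ih =>
    rw [Function.iterate_succ_apply']
    refine (ih (by omega)).derivative hI ?_
    rw [natDegree_iterate_derivative_eq_sub]
    omega

lemma natDegree_mul_abs_eval_le (hf : AllRootsIn f I) (hI : I.OrdConnected) (hc : c ∉ I) {M : ℝ}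
    (hM0 : 0 ≤ M) (hM : ∀ t ∈ I, |c - t| ≤ M) :
    f.natDegree * |f.eval c| ≤ M * |(Polynomial.derivative f).eval c| := by
  obtain ⟨ε, hε, hside⟩ := exists_abs_eq_one_forall_mul_inv_sub hI hc
  have hsum : (f.natDegree : ℝ) ≤ M * (ε * (f.roots.map fun t => 1 / (c - t)).sum) := by
    rw [hf.splits.natDegree_eq_card_roots, ← Multiset.sum_map_mul_left,
      ← Multiset.sum_map_mul_left, ← nsmul_one, ← Multiset.card_map]
    refine Multiset.card_nsmul_le_sum fun x hx => ?_
    obtain ⟨t, ht, rfl⟩ := Multiset.mem_map.1 hx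
    have htI := hf.mem_of_mem_roots t ht
    have hne : c - t ≠ 0 := sub_ne_zero.2 fun h => hc (h ▸ htI)
    rw [one_div, hside t htI, ← div_eq_mul_inv, one_le_div (abs_pos.2 hne)]
    exact hM t htI
  have hne : f.eval c ≠ 0 := fun h =>
    hc (hf.mem_of_mem_roots c ((mem_roots hf.ne_zero).2 h))
  calc f.natDegree * |f.eval c|
      ≤ M * (ε * (f.roots.map fun t => 1 / (c - t)).sum) * |f.eval c| := by gcongr
    _ ≤ M * |ε * (f.roots.map fun t => 1 / (c - t)).sum| * |f.eval c| := by
        gcongr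
        exact le_abs_self _
    _ = M * |(Polynomial.derivative f).eval c| := by
        rw [hf.splits.eval_derivative_eq_eval_mul_sum hne, abs_mul, abs_mul, hε]
        ring

end AllRootsIn

end Rolle

/-! ### Sequentially ordered mass points -/

section SequentialOrder

variable {N : ℕ} {c : Fin N → ℝ} {d : Fin N → ℕ} {p : ℝ[X]}

lemma SeqOrdered.injective (h : SeqOrdered c d) : Function.Injective c := by
  have hlt (i j : Fin N) (hij : i < j) : c i ≠ c j := fun heq =>
    h.2 j (subset_convexHull ℝ _ (Or.inr ⟨i, hij, heq⟩))
  intro i j heq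
  by_contra hne
  rcases lt_or_gt_of_ne hne with hij | hji
  · exact hlt i j hij heq
  · exact hlt j i hji heq.symm

/-- The functional `p ↦ p^(m)(t)`. -/
def derivEval (m : ℕ) (t : ℝ) : ℝ[X] →ₗ[ℝ] ℝ :=
  (leval t).comp (derivative ^ m)

lemma derivEval_apply (m : ℕ) (t : ℝ) (p : ℝ[X]) :
    derivEval m t p = (derivative^[m] p).eval t := by
  rw [derivEval, LinearMap.comp_apply, Module.End.pow_apply]
  rfl

/-- The Sobolev part of the inner product vanishes at `p`. -/
def VanishesAtMasses (c : Fin N → ℝ) (d : Fin N → ℕ) (p : ℝ[X]) : Prop :=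
  ∀ j, (derivative^[d j] p).eval (c j) = 0

/-- The convex hull of `(-1, 1)` and of the mass points carrying a derivative of order below `t`.
It contains the zeros of `p^(t)` that Rolle's theorem produces from those of `p` when `p` vanishes
at the masses. -/
def massHull (c : Fin N → ℝ) (d : Fin N → ℕ) (t : ℕ) : Set ℝ :=
  convexHull ℝ (Set.Ioo (-1 : ℝ) 1 ∪ c '' {j | d j < t})

lemma massHull_zero : massHull c d 0 = Set.Ioo (-1 : ℝ) 1 := by
  simp [massHull, (convex_Ioo (-1 : ℝ) 1).convexHull_eq]

lemma massHull_ordConnected {t : ℕ} : (massHull c d t).OrdConnected :=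
  (convex_convexHull ℝ _).ordConnected

lemma massHull_mono : Monotone (massHull c d) := fun _ _ hst =>
  convexHull_mono (Set.union_subset_union_right _
    (Set.image_mono fun _ hj => lt_of_lt_of_le hj hst))

lemma mem_massHull {j : Fin N} {t : ℕ} (hj : d j < t) : c j ∈ massHull c d t :=
  subset_convexHull ℝ _ (Or.inr ⟨j, hj, rfl⟩)

lemma SeqOrdered.notMem_massHull (h : SeqOrdered c d) (j : Fin N) :
    c j ∉ massHull c d (d j) := fun hmem =>
  h.2 j (convexHull_mono (Set.union_subset_union_right _
    (Set.image_mono fun i hi => lt_of_not_ge fun hji => (h.1 j i hji).not_gt hi)) hmem)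

lemma SeqOrdered.N0_massHull_add_card_le (h : SeqOrdered c d) (hp : VanishesAtMasses c d p)
    {t : ℕ} (hne : derivative^[t] p ≠ 0) :
    N0 (derivative^[t] p) (massHull c d t) + (Finset.univ.filter fun j => d j = t).card ≤
      N0 (derivative^[t] p) (massHull c d (t + 1)) := by
  set f := derivative^[t] p
  set R := f.roots.filter (· ∈ massHull c d (t + 1))
  have hold : R.filter (· ∈ massHull c d t) = f.roots.filter (· ∈ massHull c d t) := by
    rw [Multiset.filter_filter]
    exact Multiset.filter_congr fun x _ =>
      ⟨fun hx => hx.1, fun hx => ⟨hx, massHull_mono t.le_succ hx⟩⟩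
  have hnew : ((Finset.univ.filter fun j => d j = t).image c).val ≤
      R.filter fun x => ¬ x ∈ massHull c d t := by
    refine (Multiset.le_iff_subset (Finset.nodup _)).2 fun x hx => ?_
    obtain ⟨j, hj, rfl⟩ := Finset.mem_image.1 (Finset.mem_def.2 hx)
    obtain rfl : d j = t := (Finset.mem_filter.1 hj).2
    rw [Multiset.mem_filter, Multiset.mem_filter, mem_roots hne]
    exact ⟨⟨hp j, mem_massHull (Nat.lt_succ_self _)⟩, h.notMem_massHull j⟩
  have hcard := Multiset.card_le_card hnew
  rw [Finset.card_val, Finset.card_image_of_injective _ h.injective] at hcard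
  have hsplit := congrArg Multiset.card (Multiset.filter_add_not (· ∈ massHull c d t) R)
  rw [hold, Multiset.card_add] at hsplit
  rw [N0, N0, ← hsplit]
  exact Nat.add_le_add_left hcard _

lemma SeqOrdered.N0_Ioo_add_card_le (h : SeqOrdered c d) (hp : VanishesAtMasses c d p)
    {t : ℕ} (ht : t ≤ p.natDegree) :
    N0 p (Set.Ioo (-1 : ℝ) 1) + (Finset.univ.filter fun j => d j < t).card ≤
      N0 (derivative^[t] p) (massHull c d t) + t := by
  induction t with
  | zero => simp [massHull_zero]
  | succ t ih =>
    have hne : derivative^[t] p ≠ 0 := by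
      intro h0
      have := natDegree_iterate_derivative_eq_sub p t
      rw [h0, natDegree_zero] at this
      omega
    have hcard : (Finset.univ.filter fun j => d j < t + 1).card =
        (Finset.univ.filter fun j => d j < t).card +
          (Finset.univ.filter fun j => d j = t).card := by
      rw [← Finset.card_union_of_disjoint (Finset.disjoint_filter.2 fun j _ hlt => hlt.ne),
        ← Finset.filter_or]
      simp only [Nat.lt_succ_iff_lt_or_eq]
    have hrolle := N0_le_N0_derivative_add_one (derivative^[t] p)
      (massHull_ordConnected (c := c) (d := d) (t := t + 1))
    have hmass := h.N0_massHull_add_card_le hp hne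
    have := ih (by omega)
    rw [Function.iterate_succ_apply', hcard]
    omega

lemma SeqOrdered.N0_Ioo_add_card_le_natDegree (h : SeqOrdered c d)
    (hp : VanishesAtMasses c d p) :
    N0 p (Set.Ioo (-1 : ℝ) 1) + (Finset.univ.filter fun j => d j < p.natDegree).card ≤
      p.natDegree := by
  have hcount := h.N0_Ioo_add_card_le hp le_rfl
  have hconst := N0_le_natDegree (derivative^[p.natDegree] p) (massHull c d p.natDegree)
  rw [natDegree_iterate_derivative_eq_sub] at hconst
  omega

/-- The monic polynomial `∏ (x - cⱼ)^(dⱼ+1)`, whose multiples all vanish at the masses. -/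
def massPoly (c : Fin N → ℝ) (d : Fin N → ℕ) : ℝ[X] :=
  ∏ j, (X - C (c j)) ^ (d j + 1)

lemma massPoly_monic : (massPoly c d).Monic :=
  monic_prod_of_monic _ _ fun j _ => (monic_X_sub_C (c j)).pow _

lemma vanishesAtMasses_massPoly_mul (p : ℝ[X]) : VanishesAtMasses c d (massPoly c d * p) := by
  intro j
  have hdvd : (X - C (c j)) ^ (d j + 1) ∣ massPoly c d * p :=
    (Finset.dvd_prod_of_mem _ (Finset.mem_univ j)).mul_right p
  simpa using dvd_iff_isRoot.1
    (dvd_trans (by simp) (pow_sub_dvd_iterate_derivative_of_pow_dvd (d j) hdvd))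

lemma exists_vanishesAtMasses_natDegree_lt {s : ℕ} {T : Finset ℝ}
    (hs : T.card + (Finset.univ.filter fun j => d j < s).card < s) :
    ∃ q : ℝ[X], q ≠ 0 ∧ q.natDegree < s ∧ (∀ t ∈ T, q.IsRoot t) ∧ VanishesAtMasses c d q := by
  obtain ⟨q, hq0, hdeg, hq⟩ := exists_ne_zero_degree_lt_forall_map_eq_zero
    (Sum.elim (fun t : T => leval (t : ℝ)) (fun j : {j // d j < s} => derivEval (d j) (c j)))
    (s := s) (by simpa [Fintype.card_subtype] using hs)
  rw [← natDegree_lt_iff_degree_lt hq0] at hdeg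
  refine ⟨q, hq0, hdeg, fun t ht => hq (Sum.inl ⟨t, ht⟩), fun j => ?_⟩
  by_cases hj : d j < s
  · rw [← derivEval_apply]
    exact hq (Sum.inr ⟨j, hj⟩)
  · rw [iterate_derivative_eq_zero (by omega), eval_zero]

-- Take `p` of least degree: the dimension count bounds its degree from above by the number of
-- effective conditions, and Rolle's theorem bounds it from below by the same number.
lemma SeqOrdered.exists_vanishesAtMasses_N0_le (h : SeqOrdered c d) (T : Finset ℝ) :
    ∃ p : ℝ[X], p ≠ 0 ∧ p.natDegree ≤ T.card + N ∧ (∀ t ∈ T, p.IsRoot t) ∧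
      VanishesAtMasses c d p ∧ N0 p (Set.Ioo (-1 : ℝ) 1) ≤ T.card := by
  let A : Set ℝ[X] := {p | p ≠ 0 ∧ (∀ t ∈ T, p.IsRoot t) ∧ VanishesAtMasses c d p}
  have hA : A.Nonempty := by
    refine ⟨massPoly c d * Lagrange.nodal T id,
      mul_ne_zero massPoly_monic.ne_zero Lagrange.nodal_ne_zero, fun t ht => ?_,
      vanishesAtMasses_massPoly_mul _⟩
    rw [IsRoot, eval_mul, show t = id t from rfl, Lagrange.eval_nodal_at_node ht, mul_zero]
  obtain ⟨p, ⟨hp0, hpT, hp⟩, hmin⟩ := exists_minimalFor_of_wellFoundedLT (· ∈ A) natDegree hA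
  have hdim : p.natDegree ≤
      T.card + (Finset.univ.filter fun j => d j < p.natDegree).card := by
    by_contra! hlt
    obtain ⟨q, hq0, hdeg, hqT, hq⟩ := exists_vanishesAtMasses_natDegree_lt hlt (c := c)
    exact hdeg.not_ge (hmin ⟨hq0, hqT, hq⟩ hdeg.le)
  have hrolle := h.N0_Ioo_add_card_le_natDegree hp
  have hcard : (Finset.univ.filter fun j => d j < p.natDegree).card ≤ N :=
    (Finset.card_le_univ _).trans_eq (Fintype.card_fin N)
  exact ⟨p, hp0, by omega, hpT, hp, by omega⟩

end SequentialOrder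

/-! ### Interlacing -/

section Interlacing

variable {ι : Type*} {f g p : ℝ[X]} {a b : ℝ} {I : Set ℝ} {y : ℕ → ℝ} {n : ℕ}

lemma exists_isRoot_mem_Ioo (hab : a ≤ b) (h : f.eval a * f.eval b < 0) :
    ∃ x ∈ Set.Ioo a b, f.IsRoot x := by
  have h0 : (0 : ℝ) ∈ Set.uIcc (f.eval a) (f.eval b) := by
    rcases mul_neg_iff.1 h with ⟨ha, hb⟩ | ⟨ha, hb⟩
    · exact Set.mem_uIcc.2 (Or.inr ⟨hb.le, ha.le⟩)
    · exact Set.mem_uIcc.2 (Or.inl ⟨ha.le, hb.le⟩)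
  obtain ⟨x, hx, hx0⟩ := intermediate_value_uIcc f.continuousOn h0
  rw [Set.uIcc_of_le hab] at hx
  refine ⟨x, ⟨hx.1.lt_of_ne ?_, hx.2.lt_of_ne ?_⟩, hx0⟩
  · rintro rfl
    simp [hx0] at h
  · rintro rfl
    simp [hx0] at h

lemma eval_mul_eval_pos_of_forall_ne_zero (hI : I.OrdConnected) (hg : ∀ t ∈ I, g.eval t ≠ 0)
    (hab : a ≤ b) (ha : a ∈ I) (hb : b ∈ I) : 0 < g.eval a * g.eval b := by
  refine (mul_ne_zero (hg a ha) (hg b hb)).symm.lt_of_le (not_lt.1 fun hneg => ?_)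
  obtain ⟨t, ht, hroot⟩ := exists_isRoot_mem_Ioo hab hneg
  exact hg t (hI.out ha hb (Set.Ioo_subset_Icc_self ht)) hroot

lemma nodal_dvd_of_forall_isRoot {J : Finset ι} {m : ι → ℝ} (hm : Set.InjOn m J)
    (hroot : ∀ i ∈ J, p.IsRoot (m i)) : Lagrange.nodal J m ∣ p :=
  Finset.prod_dvd_of_coprime
    (fun _ hi _ hj hij => isCoprime_X_sub_C_of_isUnit_sub
      (sub_ne_zero.2 fun h => hij (hm hi hj h)).isUnit)
    fun i hi => dvd_iff_isRoot.2 (hroot i hi)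

lemma exists_eq_nodal_mul_forall_eval_ne_zero {J : Finset ι} {m : ι → ℝ} (hm : Set.InjOn m J)
    (hmI : ∀ i ∈ J, m i ∈ I) (hp : p ≠ 0) (hroot : ∀ i ∈ J, p.IsRoot (m i))
    (hN0 : N0 p I ≤ J.card) :
    ∃ g : ℝ[X], p = Lagrange.nodal J m * g ∧ ∀ t ∈ I, g.eval t ≠ 0 := by
  obtain ⟨g, hg⟩ := nodal_dvd_of_forall_isRoot hm hroot
  refine ⟨g, hg, fun t ht h => hN0.not_gt ?_⟩
  have hroots : (Lagrange.nodal J m).roots = J.val.map m := by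
    rw [← roots_multiset_prod_X_sub_C (J.val.map m), Multiset.map_map]
    rfl
  have hfilter : (J.val.map m).filter (· ∈ I) = J.val.map m :=
    Multiset.filter_eq_self.2 fun x hx => by
      obtain ⟨i, hi, rfl⟩ := Multiset.mem_map.1 hx
      exact hmI i hi
  have hg0 : g ≠ 0 := right_ne_zero_of_mul (hg ▸ hp)
  have hpos : 0 < (g.roots.filter (· ∈ I)).card :=
    Multiset.card_pos_iff_exists_mem.2 ⟨t, Multiset.mem_filter.2 ⟨(mem_roots hg0).2 h, ht⟩⟩
  rw [N0, hg, roots_mul (hg ▸ hp), Multiset.filter_add, hroots, hfilter, Multiset.card_add,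
    Multiset.card_map, Finset.card_val]
  omega

/-- The sign of `a i`, where a vanishing term inherits the sign of its predecessor. -/
def carrySign (a : ℕ → ℝ) : ℕ → ℝ
  | 0 => if a 0 < 0 then -1 else 1
  | i + 1 => if a (i + 1) < 0 then -1 else if 0 < a (i + 1) then 1 else carrySign a i

lemma carrySign_eq_one_or_neg_one (a : ℕ → ℝ) (i : ℕ) :
    carrySign a i = 1 ∨ carrySign a i = -1 := by
  induction i with
  | zero => rw [carrySign]; split_ifs <;> simp
  | succ i ih => rw [carrySign]; split_ifs <;> simp [ih]

lemma eq_carrySign_mul_abs (a : ℕ → ℝ) (i : ℕ) : a i = carrySign a i * |a i| := by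
  rcases lt_trichotomy (a i) 0 with h | h | h
  · cases i <;> simp [carrySign, h, abs_of_neg h]
  · simp [h]
  · cases i <;> simp [carrySign, h, h.not_gt, abs_of_pos h]

lemma exists_isRoot_mem_Ico_of_carrySign_ne {i : ℕ} (hy : y i < y (i + 1))
    (h : carrySign (fun j => f.eval (y j)) (i + 1) ≠ carrySign (fun j => f.eval (y j)) i) :
    ∃ x ∈ Set.Ico (y i) (y (i + 1)), f.IsRoot x := by
  by_cases hi : f.eval (y i) = 0
  · exact ⟨y i, ⟨le_rfl, hy⟩, hi⟩
  have hi' : f.eval (y (i + 1)) ≠ 0 := fun h0 => h (by simp [carrySign, h0])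
  have hneg : f.eval (y i) * f.eval (y (i + 1)) < 0 := by
    rw [eq_carrySign_mul_abs (fun j => f.eval (y j)) i,
      eq_carrySign_mul_abs (fun j => f.eval (y j)) (i + 1)]
    have hpos := mul_pos (abs_pos.2 hi) (abs_pos.2 hi')
    rcases carrySign_eq_one_or_neg_one (fun j => f.eval (y j)) i with hs | hs <;>
    rcases carrySign_eq_one_or_neg_one (fun j => f.eval (y j)) (i + 1) with hs' | hs' <;>
    rw [hs, hs'] at h ⊢ <;> first | exact absurd rfl h | linarith
  obtain ⟨x, hx, hroot⟩ := exists_isRoot_mem_Ioo hy.le hneg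
  exact ⟨x, Set.Ioo_subset_Ico_self hx, hroot⟩

lemma eval_nodal_mul_eval_nodal_pos {J : Finset ℕ} {m : ℕ → ℝ} (hy : MonotoneOn y (Set.Iio n))
    (hm : ∀ i ∈ J, i + 1 < n ∧ m i ∈ Set.Ioo (y i) (y (i + 1))) {k : ℕ} (hk : k + 1 < n)
    (hkJ : k ∉ J) :
    0 < (Lagrange.nodal J m).eval (y k) * (Lagrange.nodal J m).eval (y (k + 1)) := by
  have hle : y k ≤ y (k + 1) := hy (Nat.lt_of_succ_lt hk) hk k.le_succ
  rw [Lagrange.eval_nodal, Lagrange.eval_nodal, ← Finset.prod_mul_distrib]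
  refine Finset.prod_pos fun i hi => ?_
  obtain ⟨hin, hlt, hlt'⟩ := hm i hi
  rcases lt_or_gt_of_ne (ne_of_mem_of_not_mem hi hkJ) with hik | hki
  · have : y (i + 1) ≤ y k := hy hin (Nat.lt_of_succ_lt hk) hik
    exact mul_pos (by linarith) (by linarith)
  · have : y (k + 1) ≤ y i := hy hk (Nat.lt_of_succ_lt hin) hki
    exact mul_pos_of_neg_of_neg (by linarith) (by linarith)

lemma eval_nodal_mul_eval_nodal_neg {J : Finset ℕ} {m : ℕ → ℝ} (hy : MonotoneOn y (Set.Iio n))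
    (hm : ∀ i ∈ J, i + 1 < n ∧ m i ∈ Set.Ioo (y i) (y (i + 1))) {k : ℕ} (hkJ : k ∈ J) :
    (Lagrange.nodal J m).eval (y k) * (Lagrange.nodal J m).eval (y (k + 1)) < 0 := by
  obtain ⟨hk, hlt, hlt'⟩ := hm k hkJ
  have hrest := eval_nodal_mul_eval_nodal_pos hy (fun i hi => hm i (Finset.mem_of_mem_erase hi)) hk
    (Finset.notMem_erase k J)
  have hk_factor : (y k - m k) * (y (k + 1) - m k) < 0 :=
    mul_neg_of_neg_of_pos (by linarith) (by linarith)
  rw [Lagrange.nodal_eq_mul_nodal_erase hkJ, eval_mul, eval_mul, mul_mul_mul_comm]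
  simpa using mul_neg_of_neg_of_pos hk_factor hrest

lemma mul_pos_of_forall_mul_succ_pos {T : ℕ → ℝ} (h0 : T 0 ≠ 0)
    (h : ∀ k, k + 1 < n → 0 < T k * T (k + 1)) {k : ℕ} (hk : k < n) : 0 < T 0 * T k := by
  induction k with
  | zero => exact mul_self_pos.2 h0
  | succ k ih =>
    have hprod : 0 < T 0 * T (k + 1) * T k ^ 2 := by
      linarith [mul_pos (ih (by omega)) (h k hk)]
    exact pos_of_mul_pos_left hprod (sq_nonneg _)

/-- The indices `i` with `i + 1 < n` after which the sequence `σ` changes. -/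
def changes (σ : ℕ → ℝ) (n : ℕ) : Finset ℕ :=
  (Finset.range (n - 1)).filter fun i => σ (i + 1) ≠ σ i

lemma mem_changes {σ : ℕ → ℝ} {i : ℕ} :
    i ∈ changes σ n ↔ i + 1 < n ∧ σ (i + 1) ≠ σ i := by
  rw [changes, Finset.mem_filter, Finset.mem_range, Nat.lt_sub_iff_add_lt]

lemma mul_eval_nodal_changes_pos {σ m : ℕ → ℝ} (hy : MonotoneOn y (Set.Iio n))
    (hσ : ∀ i, σ i = 1 ∨ σ i = -1)
    (hm : ∀ i ∈ changes σ n, i + 1 < n ∧ m i ∈ Set.Ioo (y i) (y (i + 1))) {k : ℕ}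
    (hk : k + 1 < n) :
    0 < σ k * σ (k + 1) * ((Lagrange.nodal (changes σ n) m).eval (y k) *
      (Lagrange.nodal (changes σ n) m).eval (y (k + 1))) := by
  by_cases hkJ : k ∈ changes σ n
  · have hneg := eval_nodal_mul_eval_nodal_neg hy hm hkJ
    have hne := (mem_changes.1 hkJ).2
    rcases hσ k with hs | hs <;> rcases hσ (k + 1) with hs' | hs' <;> rw [hs, hs'] at hne ⊢ <;>
      first | exact absurd rfl hne | linarith
  · have hpos := eval_nodal_mul_eval_nodal_pos hy hm hk hkJ
    have heq : σ (k + 1) = σ k := by_contra fun hne => hkJ (mem_changes.2 ⟨hk, hne⟩)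
    rcases hσ k with hs | hs <;> rw [heq, hs] <;> linarith

lemma injOn_midpoint (hy : StrictMonoOn y (Set.Iio n)) {J : Finset ℕ} (hJ : ∀ i ∈ J, i + 1 < n) :
    Set.InjOn (fun i => (y i + y (i + 1)) / 2) J := by
  have hlt : StrictMonoOn (fun i => (y i + y (i + 1)) / 2) J := by
    intro i hi j hj hij
    have hij' : y i < y j := hy (Nat.lt_of_succ_lt (hJ i hi)) (Nat.lt_of_succ_lt (hJ j hj)) hij
    have hij'' : y (i + 1) < y (j + 1) := hy (hJ i hi) (hJ j hj) (Nat.succ_lt_succ hij)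
    exact div_lt_div_of_pos_right (add_lt_add hij' hij'') two_pos
  exact hlt.injOn

variable {N : ℕ} {c : Fin N → ℝ} {d : Fin N → ℕ}

lemma SeqOrdered.exists_vanishesAtMasses_sign (h : SeqOrdered c d)
    (hy : StrictMonoOn y (Set.Iio n)) (hyI : ∀ i < n, y i ∈ Set.Ioo (-1 : ℝ) 1) {σ : ℕ → ℝ}
    (hσ : ∀ i, σ i = 1 ∨ σ i = -1) :
    ∃ p : ℝ[X], p ≠ 0 ∧ p.natDegree ≤ (changes σ n).card + N ∧ VanishesAtMasses c d p ∧
      ∀ i < n, 0 < (σ 0 * p.eval (y 0)) * (σ i * p.eval (y i)) := by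
  set J := changes σ n
  set m : ℕ → ℝ := fun i => (y i + y (i + 1)) / 2
  have hJ (i : ℕ) (hi : i ∈ J) : i + 1 < n ∧ m i ∈ Set.Ioo (y i) (y (i + 1)) := by
    have hin := (mem_changes.1 hi).1
    have hlt : y i < y (i + 1) := hy (Nat.lt_of_succ_lt hin) hin i.lt_succ_self
    exact ⟨hin, left_lt_add_div_two.2 hlt, add_div_two_lt_right.2 hlt⟩
  have hmI (i : ℕ) (hi : i ∈ J) : m i ∈ Set.Ioo (-1 : ℝ) 1 := by
    obtain ⟨hin, hlt, hlt'⟩ := hJ i hi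
    exact ⟨(hyI i (by omega)).1.trans hlt, hlt'.trans (hyI _ hin).2⟩
  have hinj : Set.InjOn m J := injOn_midpoint hy fun i hi => (hJ i hi).1
  obtain ⟨p, hp0, hdeg, hroot, hp, hN0⟩ := h.exists_vanishesAtMasses_N0_le (J.image m)
  rw [Finset.card_image_of_injOn hinj] at hdeg hN0
  obtain ⟨g, rfl, hg⟩ := exists_eq_nodal_mul_forall_eval_ne_zero hinj hmI hp0
    (fun i hi => hroot _ (Finset.mem_image_of_mem m hi)) hN0
  refine ⟨_, hp0, hdeg, hp, fun i hi => ?_⟩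
  refine mul_pos_of_forall_mul_succ_pos (T := fun i => σ i * (Lagrange.nodal J m * g).eval (y i))
    (mul_ne_zero (by rcases hσ 0 with h | h <;> simp [h]) ?_) (fun k hk => ?_) hi
  · rw [eval_mul, Lagrange.eval_nodal]
    refine mul_ne_zero (Finset.prod_ne_zero_iff.2 fun j hj => ?_) (hg _ (hyI 0 (by omega)))
    obtain ⟨hjn, hlt, -⟩ := hJ j hj
    have : y 0 ≤ y j := hy.monotoneOn (by simp; omega) (by simp; omega) j.zero_le
    exact sub_ne_zero.2 (this.trans_lt hlt).ne
  · have hkn : k < n := by omega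
    have hgpos := eval_mul_eval_pos_of_forall_ne_zero Set.ordConnected_Ioo hg
      (hy.monotoneOn hkn hk k.le_succ) (hyI k hkn) (hyI _ hk)
    have hM := mul_eval_nodal_changes_pos hy.monotoneOn hσ hJ hk
    simp only [eval_mul]
    linarith [mul_pos hM hgpos]

variable {L : ℝ[X] →ₗ[ℝ] ℝ} {P S : ℝ[X]}

lemma SortedZeros.map_ne_zero (hy : SortedZeros P n a b y) (hP : IsMonicOrthogonal L n P)
    (hL : PosDefFunctional L) (hf : f.degree < (2 * n : ℕ)) {τ : ℝ}
    (hτ : ∀ i < n, 0 ≤ τ * f.eval (y i)) {k : ℕ} (hk : k < n) (hpos : 0 < τ * f.eval (y k)) :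
    L f ≠ 0 := by
  have hP' : IsMonicOrthogonal L (Finset.range n).card (Lagrange.nodal (Finset.range n) y) := by
    rwa [Finset.card_range, ← hy.eq_nodal]
  have hw {i : ℕ} (hi : i ∈ Finset.range n) := hP'.map_basis_pos hL hy.injOn hi
  have hsum : 0 < τ * L f := by
    rw [hP'.gauss_quadrature hy.injOn (by rwa [Finset.card_range]), Finset.mul_sum]
    simp only [mul_left_comm τ]
    exact Finset.sum_pos'
      (fun i hi => mul_nonneg (hw hi).le (hτ i (Finset.mem_range.1 hi)))
      ⟨k, Finset.mem_range.2 hk, mul_pos (hw (Finset.mem_range.2 hk)) hpos⟩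
  exact right_ne_zero_of_mul hsum.ne'

-- Otherwise some `p` of degree below `n` vanishing at the masses would have the sign of `S` at
-- every node of the quadrature formula, although `L (p * S) = 0`.
lemma SeqOrdered.le_card_changes_add (h : SeqOrdered c d) (hL : PosDefFunctional L)
    (hP : IsMonicOrthogonal L n P) (hy : SortedZeros P n (-1) 1 y) (hSdeg : S.natDegree = n)
    (hS : ∀ p : ℝ[X], p.degree < n → VanishesAtMasses c d p → L (p * S) = 0) {k : ℕ}
    (hk : k < n) (hSk : S.eval (y k) ≠ 0) :
    n ≤ (changes (carrySign fun i => S.eval (y i)) n).card + N := by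
  set s : ℕ → ℝ := fun i => S.eval (y i)
  refine not_lt.1 fun hlt => ?_
  obtain ⟨p, hp0, hdeg, hp, hsign⟩ := h.exists_vanishesAtMasses_sign
    (hy.strictMonoOn.mono fun i (hi : i < n) => hi.le) (fun i hi => hy.mem_Ioo hi)
    (carrySign_eq_one_or_neg_one s)
  have hS0 : S ≠ 0 := by
    rintro rfl
    exact hSk eval_zero
  have hzero : L (p * S) = 0 :=
    hS p ((natDegree_lt_iff_degree_lt hp0).1 (hdeg.trans_lt hlt)) hp
  have hdeg' : (p * S).degree < (2 * n : ℕ) := by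
    rw [← natDegree_lt_iff_degree_lt (mul_ne_zero hp0 hS0), natDegree_mul hp0 hS0]
    omega
  set τ := carrySign s 0 * p.eval (y 0)
  have heval (i : ℕ) : τ * (p * S).eval (y i) =
      τ * (carrySign s i * p.eval (y i)) * |S.eval (y i)| := by
    rw [eval_mul]
    linear_combination τ * p.eval (y i) * eq_carrySign_mul_abs s i
  refine hy.map_ne_zero hP hL hdeg' (τ := τ) (fun i hi => ?_) hk ?_ hzero
  · exact heval i ▸ mul_nonneg (hsign i hi).le (abs_nonneg _)
  · exact heval k ▸ mul_pos (hsign k hk) (abs_pos.2 hSk)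

lemma SeqOrdered.exists_isRoot_mem_cells (h : SeqOrdered c d) (hL : PosDefFunctional L)
    (hP : IsMonicOrthogonal L n P) (hy : SortedZeros P n (-1) 1 y) (hSdeg : S.natDegree = n)
    (hS : ∀ p : ℝ[X], p.degree < n → VanishesAtMasses c d p → L (p * S) = 0) :
    ∃ J ⊆ Finset.range n, n ≤ J.card + N ∧
      ∃ x : ℕ → ℝ, ∀ i ∈ J, S.IsRoot (x i) ∧ x i ∈ Set.Ico (y i) (y (i + 1)) := by
  by_cases hall : ∀ i < n, S.IsRoot (y i)
  · refine ⟨Finset.range n, subset_rfl, by simp, y, fun i hi => ?_⟩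
    have hin := Finset.mem_range.1 hi
    exact ⟨hall i hin, le_rfl, hy.lt i.lt_succ_self hin⟩
  push Not at hall
  obtain ⟨k, hk, hSk⟩ := hall
  have hroot (i : ℕ) (hi : i ∈ changes (carrySign fun i => S.eval (y i)) n) :
      ∃ x, S.IsRoot x ∧ x ∈ Set.Ico (y i) (y (i + 1)) := by
    obtain ⟨hin, hne⟩ := mem_changes.1 hi
    obtain ⟨x, hx, hx0⟩ :=
      exists_isRoot_mem_Ico_of_carrySign_ne (hy.lt i.lt_succ_self hin.le) hne
    exact ⟨x, hx0, hx⟩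
  choose! x hx using hroot
  exact ⟨_, fun i hi => Finset.mem_range.2 (Nat.lt_of_succ_lt (mem_changes.1 hi).1),
    h.le_card_changes_add hL hP hy hSdeg hS hk hSk, x, hx⟩

lemma prod_norm_sub_le_exp_mul_prod_norm_sub (hy : SortedZeros P n a b y) (hab : a ≤ b)
    {J : Finset ℕ} (hJ : J ⊆ Finset.range n) {x : ℕ → ℝ}
    (hx : ∀ i ∈ J, x i ∈ Set.Ico (y i) (y (i + 1))) {z : ℂ} {δ : ℝ} (hδ : 0 < δ)
    (hz : ∀ i ∈ J, δ ≤ ‖z - (x i : ℂ)‖) :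
    ∏ i ∈ J, ‖z - (y i : ℂ)‖ ≤ Real.exp ((b - a) / δ) * ∏ i ∈ J, ‖z - (x i : ℂ)‖ := by
  have hcell (i : ℕ) (hi : i ∈ J) :
      ‖z - (y i : ℂ)‖ ≤ Real.exp ((y (i + 1) - y i) / δ) * ‖z - (x i : ℂ)‖ := by
    have hnorm : ‖(x i : ℂ) - (y i : ℂ)‖ ≤ (y (i + 1) - y i) / δ * ‖z - (x i : ℂ)‖ := by
      rw [← Complex.ofReal_sub, Complex.norm_real, Real.norm_of_nonneg (sub_nonneg.2 (hx i hi).1),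
        div_mul_eq_mul_div, le_div_iff₀ hδ]
      exact mul_le_mul (sub_le_sub_right (hx i hi).2.le _) (hz i hi) hδ.le
        (sub_nonneg.2 ((hx i hi).1.trans (hx i hi).2.le))
    calc ‖z - (y i : ℂ)‖ ≤ ‖z - (x i : ℂ)‖ + ‖(x i : ℂ) - (y i : ℂ)‖ :=
          norm_sub_le_norm_sub_add_norm_sub _ _ _
      _ ≤ ((y (i + 1) - y i) / δ + 1) * ‖z - (x i : ℂ)‖ := by linarith
      _ ≤ _ := by
          gcongr
          exact Real.add_one_le_exp _
  have hlength : ∑ i ∈ J, (y (i + 1) - y i) ≤ b - a := by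
    refine (Finset.sum_le_sum_of_subset_of_nonneg hJ fun i hi _ =>
      (sub_pos.2 (hy.lt i.lt_succ_self (Finset.mem_range.1 hi))).le).trans ?_
    rw [Finset.sum_range_sub, hy.last]
    rcases n.eq_zero_or_pos with rfl | hn
    · rw [hy.last]
      linarith
    · linarith [hy.lt_zero 0 hn]
  calc ∏ i ∈ J, ‖z - (y i : ℂ)‖
      ≤ ∏ i ∈ J, (Real.exp ((y (i + 1) - y i) / δ) * ‖z - (x i : ℂ)‖) :=
        Finset.prod_le_prod (fun _ _ => norm_nonneg _) hcell
    _ = Real.exp ((∑ i ∈ J, (y (i + 1) - y i)) / δ) * ∏ i ∈ J, ‖z - (x i : ℂ)‖ := by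
        rw [Finset.prod_mul_distrib, ← Real.exp_sum, Finset.sum_div]
    _ ≤ _ := by gcongr

/-- `S = q * r`, where `q` has its zeros in `[-1, 1]`, the monic cofactor `r` has degree at most
`N`, and `q` dominates `P` away from `[-1, 1]`. -/
structure DominatingFactorization (N : ℕ) (P S q r : ℝ[X]) : Prop where
  eq_mul : S = q * r
  allRootsIn : AllRootsIn q (Set.Icc (-1) 1)
  monic_right : r.Monic
  natDegree_right_le : r.natDegree ≤ N
  norm_aeval_le : ∀ δ > 0, ∀ z : ℂ, (∀ t ∈ Set.Icc (-1 : ℝ) 1, δ ≤ ‖z - (t : ℂ)‖) →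
    ‖aeval z P‖ ≤ Real.exp (2 / δ) * (‖z‖ + 1) ^ N * ‖aeval z q‖

lemma norm_aeval_nodal (J : Finset ι) (v : ι → ℝ) (z : ℂ) :
    ‖aeval z (Lagrange.nodal J v)‖ = ∏ i ∈ J, ‖z - (v i : ℂ)‖ := by
  simp [Lagrange.nodal, map_prod, norm_prod]

lemma allRootsIn_nodal {J : Finset ι} {v : ι → ℝ} (hv : ∀ i ∈ J, v i ∈ I) :
    AllRootsIn (Lagrange.nodal J v) I := by
  refine ⟨Lagrange.nodal_ne_zero, Splits.prod fun i _ => Splits.X_sub_C (v i), fun t ht => ?_⟩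
  have hroot : (Lagrange.nodal J v).eval t = 0 := (mem_roots'.1 ht).2
  rw [Lagrange.eval_nodal, Finset.prod_eq_zero_iff] at hroot
  obtain ⟨i, hi, hti⟩ := hroot
  exact sub_eq_zero.1 hti ▸ hv i hi

lemma SortedZeros.norm_aeval_le (hy : SortedZeros P n (-1) 1 y) {J : Finset ℕ}
    (hJ : J ⊆ Finset.range n) (hcard : n ≤ J.card + N) {x : ℕ → ℝ}
    (hx : ∀ i ∈ J, x i ∈ Set.Ico (y i) (y (i + 1))) {z : ℂ} {δ : ℝ} (hδ : 0 < δ)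
    (hz : ∀ i ∈ J, δ ≤ ‖z - (x i : ℂ)‖) :
    ‖aeval z P‖ ≤ Real.exp (2 / δ) * (‖z‖ + 1) ^ N * ‖aeval z (Lagrange.nodal J x)‖ := by
  have hrest : ∏ i ∈ Finset.range n \ J, ‖z - (y i : ℂ)‖ ≤ (‖z‖ + 1) ^ N :=
    calc ∏ i ∈ Finset.range n \ J, ‖z - (y i : ℂ)‖
        ≤ ∏ i ∈ Finset.range n \ J, (‖z‖ + 1) := by
          refine Finset.prod_le_prod (fun _ _ => norm_nonneg _) fun i hi => ?_
          have hyi := hy.mem_Ioo (Finset.mem_range.1 (Finset.mem_sdiff.1 hi).1)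
          have : ‖(y i : ℂ)‖ ≤ 1 := by
            rw [Complex.norm_real, Real.norm_eq_abs]
            exact abs_le.2 ⟨hyi.1.le, hyi.2.le⟩
          linarith [norm_sub_le z (y i : ℂ)]
      _ = (‖z‖ + 1) ^ (n - J.card) := by
          rw [Finset.prod_const, Finset.card_sdiff_of_subset hJ, Finset.card_range]
      _ ≤ (‖z‖ + 1) ^ N := pow_le_pow_right₀ (by simp) (by omega)
  have hcells := prod_norm_sub_le_exp_mul_prod_norm_sub hy (by norm_num) hJ hx hδ hz
  rw [show (1 : ℝ) - -1 = 2 by norm_num] at hcells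
  rw [hy.eq_nodal, norm_aeval_nodal, norm_aeval_nodal, ← Finset.prod_sdiff hJ,
    mul_comm (Real.exp _), mul_assoc]
  exact mul_le_mul hrest hcells (Finset.prod_nonneg fun _ _ => norm_nonneg _) (by positivity)

lemma SeqOrdered.exists_dominatingFactorization (h : SeqOrdered c d) (hL : PosDefFunctional L)
    (hLI : NonnegOnIcc L (-1) 1) (hP : IsMonicOrthogonal L n P) (hSm : S.Monic)
    (hSdeg : S.natDegree = n)
    (hS : ∀ p : ℝ[X], p.degree < n → VanishesAtMasses c d p → L (p * S) = 0) :
    ∃ q r, DominatingFactorization N P S q r := by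
  obtain ⟨y, hy⟩ := hP.exists_sortedZeros hL hLI
  obtain ⟨J, hJ, hcard, x, hx⟩ := h.exists_isRoot_mem_cells hL hP hy hSdeg hS
  have hJn {i : ℕ} (hi : i ∈ J) : i < n := Finset.mem_range.1 (hJ hi)
  have hmono : StrictMonoOn x J := fun i hi j hj hij =>
    calc x i < y (i + 1) := (hx i hi).2.2
      _ ≤ y j := hy.strictMonoOn.monotoneOn (hJn hi) (hJn hj).le hij
      _ ≤ x j := (hx j hj).2.1
  have hxI (i : ℕ) (hi : i ∈ J) : x i ∈ Set.Icc (-1 : ℝ) 1 := by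
    have hle : y (i + 1) ≤ y n := hy.strictMonoOn.monotoneOn (hJn hi) Set.self_mem_Iic (hJn hi)
    exact ⟨(hy.lt_zero i (hJn hi)).le.trans (hx i hi).2.1,
      (hx i hi).2.2.le.trans (hy.last ▸ hle)⟩
  obtain ⟨r, hr⟩ := nodal_dvd_of_forall_isRoot hmono.injOn fun i hi => (hx i hi).1
  have hrm : r.Monic := Lagrange.nodal_monic.of_mul_monic_left (hr ▸ hSm)
  have hdeg : n = J.card + r.natDegree := by
    rw [← hSdeg, hr, Lagrange.nodal_monic.natDegree_mul hrm, Lagrange.natDegree_nodal]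
  exact ⟨_, r, hr, allRootsIn_nodal hxI, hrm, by omega, fun δ hδ z hz =>
    hy.norm_aeval_le hJ hcard (fun i hi => (hx i hi).2) hδ fun i hi => hz _ (hxI i hi)⟩

end Interlacing

/-! ### Integration of polynomials over `[-1, 1]` -/

section PolyIntegral

variable {μ : Measure ℝ} [IsFiniteMeasureOnCompacts μ] {n : ℕ} {P : ℝ[X]}

lemma integrableOn_eval (μ : Measure ℝ) [IsFiniteMeasureOnCompacts μ] (p : ℝ[X]) :
    IntegrableOn (fun x => p.eval x) (Set.Icc (-1) 1) μ :=
  p.continuous.continuousOn.integrableOn_compact isCompact_Icc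

/-- The moment functional `p ↦ ∫ p dμ` of the restriction of `μ` to `[-1, 1]`. -/
def polyIntegral (μ : Measure ℝ) [IsFiniteMeasureOnCompacts μ] : ℝ[X] →ₗ[ℝ] ℝ where
  toFun p := ∫ x in Set.Icc (-1 : ℝ) 1, p.eval x ∂μ
  map_add' p q := by
    simp only [eval_add]
    exact integral_add (integrableOn_eval μ p) (integrableOn_eval μ q)
  map_smul' r p := by
    simp only [eval_smul, smul_eq_mul, RingHom.id_apply]
    exact integral_const_mul r _

lemma polyIntegral_apply (p : ℝ[X]) :
    polyIntegral μ p = ∫ x in Set.Icc (-1 : ℝ) 1, p.eval x ∂μ := rfl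

lemma nonnegOnIcc_polyIntegral : NonnegOnIcc (polyIntegral μ) (-1) 1 :=
  fun _ hp => setIntegral_nonneg measurableSet_Icc hp

/-- The `L²` norm of a polynomial for the moment functional `L`. -/
def momentNorm (L : ℝ[X] →ₗ[ℝ] ℝ) (p : ℝ[X]) : ℝ :=
  √(L (p ^ 2))

lemma momentNorm_nonneg (L : ℝ[X] →ₗ[ℝ] ℝ) (p : ℝ[X]) : 0 ≤ momentNorm L p :=
  Real.sqrt_nonneg _

lemma PosDefFunctional.sq_momentNorm {L : ℝ[X] →ₗ[ℝ] ℝ} (hL : PosDefFunctional L) (p : ℝ[X]) :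
    momentNorm L p ^ 2 = L (p ^ 2) :=
  Real.sq_sqrt (hL.map_sq_nonneg p)

lemma PosDefFunctional.momentNorm_pos {L : ℝ[X] →ₗ[ℝ] ℝ} (hL : PosDefFunctional L) {p : ℝ[X]}
    (hp : p ≠ 0) : 0 < momentNorm L p :=
  Real.sqrt_pos.2 (hL p hp)

lemma norm_integral_eval_mul_le (hL : PosDefFunctional (polyIntegral μ)) (p : ℝ[X])
    {h : ℝ → ℂ} {A : ℝ} (hA : ∀ x ∈ Set.Icc (-1 : ℝ) 1, ‖h x‖ ≤ A) :
    ‖∫ x in Set.Icc (-1 : ℝ) 1, ((p.eval x : ℝ) : ℂ) * h x ∂μ‖ ≤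
      A * (1 + polyIntegral μ 1) * momentNorm (polyIntegral μ) p := by
  rcases eq_or_ne p 0 with rfl | hp
  · simp [momentNorm]
  set s := momentNorm (polyIntegral μ) p
  have hs : 0 < s := hL.momentNorm_pos hp
  let G : ℝ[X] := A • (s⁻¹ • p ^ 2 + s • 1)
  have hle : ∀ x ∈ Set.Icc (-1 : ℝ) 1, ‖((p.eval x : ℝ) : ℂ) * h x‖ ≤ G.eval x := fun x hx => by
    have hamgm : |p.eval x| ≤ s⁻¹ * p.eval x ^ 2 + s := by
      have : s * |p.eval x| ≤ s * (s⁻¹ * p.eval x ^ 2 + s) := by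
        rw [mul_add, mul_inv_cancel_left₀ hs.ne', ← sq_abs (p.eval x)]
        nlinarith [sq_nonneg (|p.eval x| - s), sq_nonneg (|p.eval x| + s)]
      exact le_of_mul_le_mul_left this hs
    calc ‖((p.eval x : ℝ) : ℂ) * h x‖ = |p.eval x| * ‖h x‖ := by
          rw [norm_mul, Complex.norm_real, Real.norm_eq_abs]
      _ ≤ (s⁻¹ * p.eval x ^ 2 + s) * A :=
          mul_le_mul hamgm (hA x hx) (norm_nonneg _) (by positivity)
      _ = G.eval x := by simp [G, mul_comm A, add_mul]
  calc ‖∫ x in Set.Icc (-1 : ℝ) 1, ((p.eval x : ℝ) : ℂ) * h x ∂μ‖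
      ≤ polyIntegral μ G :=
        norm_integral_le_of_norm_le (integrableOn_eval μ _)
          (ae_restrict_of_forall_mem measurableSet_Icc hle)
    _ = A * (1 + polyIntegral μ 1) * s := by
        simp only [G, map_smul, map_add, smul_eq_mul, ← hL.sq_momentNorm]
        change A * (s⁻¹ * s ^ 2 + s * _) = _
        field_simp

lemma IsMonicOrthogonal.integral_eval_mul_eval_eq_zero
    (hP : IsMonicOrthogonal (polyIntegral μ) n P) {U : ℂ[X]} (hU : U.degree < n) :
    ∫ x in Set.Icc (-1 : ℝ) 1, ((P.eval x : ℝ) : ℂ) * U.eval (x : ℂ) ∂μ = 0 := by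
  rcases eq_or_ne U 0 with rfl | hU0
  · simp
  have hexpand (x : ℝ) : ((P.eval x : ℝ) : ℂ) * U.eval (x : ℂ) =
      ∑ i ∈ Finset.range n, U.coeff i * (((X ^ i * P).eval x : ℝ) : ℂ) := by
    rw [eval_eq_sum_range' ((natDegree_lt_iff_degree_lt hU0).2 hU), Finset.mul_sum]
    refine Finset.sum_congr rfl fun i _ => ?_
    rw [eval_mul, eval_pow, eval_X]
    push_cast
    ring
  simp_rw [hexpand]
  rw [integral_finsetSum _ fun i _ => (integrableOn_eval μ (X ^ i * P)).ofReal.const_mul _]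
  refine Finset.sum_eq_zero fun i hi => ?_
  rw [integral_const_mul, integral_complex_ofReal, ← polyIntegral_apply,
    hP.map_mul_eq_zero _ (by simpa using hi), Complex.ofReal_zero, mul_zero]

end PolyIntegral

/-! ### Markov-type functions off the segment -/

section Markov

open Topology

variable {μ : Measure ℝ} [IsFiniteMeasureOnCompacts μ] {n : ℕ} {P : ℝ[X]} {z z₀ : ℂ}

lemma aeval_ofReal_complex (p : ℝ[X]) (x : ℝ) : aeval (x : ℂ) p = ((p.eval x : ℝ) : ℂ) := by
  simpa using aeval_algebraMap_apply ℂ x p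

lemma sub_ofReal_ne_zero (hz : z ∉ segIcc) {x : ℝ} (hx : x ∈ Set.Icc (-1 : ℝ) 1) :
    z - (x : ℂ) ≠ 0 :=
  sub_ne_zero.2 fun h => hz ⟨x, hx, h.symm⟩

lemma isClosed_segIcc : IsClosed segIcc :=
  (isCompact_Icc.image Complex.continuous_ofReal).isClosed

lemma exists_eventually_le_norm_sub (hz₀ : z₀ ∉ segIcc) :
    ∃ δ > 0, ∀ᶠ z in 𝓝 z₀, ∀ x ∈ Set.Icc (-1 : ℝ) 1, δ ≤ ‖z - (x : ℂ)‖ := by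
  obtain ⟨δ, hδ, hball⟩ := Metric.isOpen_iff.1 isClosed_segIcc.isOpen_compl z₀ hz₀
  refine ⟨δ / 2, half_pos hδ, ?_⟩
  filter_upwards [Metric.ball_mem_nhds z₀ (half_pos hδ)] with z hz x hx
  have hfar : δ ≤ ‖z₀ - (x : ℂ)‖ := by
    by_contra! hlt
    exact hball (by rwa [Metric.mem_ball', dist_eq_norm]) ⟨x, hx, rfl⟩
  rw [Metric.mem_ball', dist_eq_norm] at hz
  linarith [norm_sub_le_norm_sub_add_norm_sub z₀ z (x : ℂ)]

lemma continuousOn_inv_sub_ofReal (hz : z ∉ segIcc) :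
    ContinuousOn (fun x : ℝ => (z - (x : ℂ))⁻¹) (Set.Icc (-1) 1) :=
  ContinuousOn.inv₀ (by fun_prop) fun _ hx => sub_ofReal_ne_zero hz hx

lemma continuousAt_inv_sub_ofReal (hz : z ∉ segIcc) {x : ℝ} (hx : x ∈ Set.Icc (-1 : ℝ) 1) :
    ContinuousAt (fun y : ℂ × ℝ => (y.1 - (y.2 : ℂ))⁻¹) (z, x) :=
  ContinuousAt.inv₀ (by fun_prop) (sub_ofReal_ne_zero hz hx)

lemma integrableOn_mul_inv_sub_ofReal (hz : z ∉ segIcc) {f : ℝ → ℂ} (hf : Continuous f) :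
    IntegrableOn (fun x : ℝ => f x * (z - (x : ℂ))⁻¹) (Set.Icc (-1) 1) μ :=
  (hf.continuousOn.mul (continuousOn_inv_sub_ofReal hz)).integrableOn_compact isCompact_Icc

lemma eventually_norm_inv_sub_ofReal_sub_lt (hz₀ : z₀ ∉ segIcc) {ε : ℝ} (hε : 0 < ε) :
    ∀ᶠ z in 𝓝 z₀, ∀ x ∈ Set.Icc (-1 : ℝ) 1, ‖(z - (x : ℂ))⁻¹ - (z₀ - (x : ℂ))⁻¹‖ < ε := by
  refine isCompact_Icc.eventually_forall_of_forall_eventually fun x hx => ?_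
  have hcont : ContinuousAt
      (fun y : ℂ × ℝ => ‖(y.1 - (y.2 : ℂ))⁻¹ - (z₀ - (y.2 : ℂ))⁻¹‖) (z₀, x) :=
    ((continuousAt_inv_sub_ofReal hz₀ hx).sub
      (ContinuousAt.inv₀ (by fun_prop) (sub_ofReal_ne_zero hz₀ hx))).norm
  exact hcont.eventually_lt_const (by simpa using hε)

-- A point off the segment is separated from it by one of the lines `im = 0`, `re = -1`,
-- `re = 1`, so a quarter-turn `u` carries all values of the Cauchy kernel to the right half plane.
lemma exists_forall_re_mul_inv_sub_ofReal_pos (hz : z ∉ segIcc) :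
    ∃ u : ℂ, ‖u‖ = 1 ∧ ∀ x ∈ Set.Icc (-1 : ℝ) 1, 0 < (u * (z - (x : ℂ))⁻¹).re := by
  suffices ∃ u : ℂ, ‖u‖ = 1 ∧
      ∀ x ∈ Set.Icc (-1 : ℝ) 1, 0 < u.re * (z.re - x) + u.im * z.im by
    obtain ⟨u, hu, hpos⟩ := this
    refine ⟨u, hu, fun x hx => ?_⟩
    have hre : (u * (z - (x : ℂ))⁻¹).re =
        (u.re * (z.re - x) + u.im * z.im) / Complex.normSq (z - x) := by
      simp only [Complex.mul_re, Complex.inv_re, Complex.inv_im, Complex.sub_re, Complex.sub_im,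
        Complex.ofReal_re, Complex.ofReal_im, sub_zero]
      ring
    exact hre ▸ div_pos (hpos x hx) (Complex.normSq_pos.2 (sub_ofReal_ne_zero hz hx))
  rcases lt_trichotomy z.im 0 with him | him | him
  · exact ⟨-Complex.I, by simp, by simp [him]⟩
  · rcases lt_or_ge z.re (-1) with hre | hre
    · exact ⟨-1, by simp, fun x hx => by simpa using hre.trans_le hx.1⟩
    · have : 1 < z.re := by
        by_contra! hle
        exact hz ⟨z.re, ⟨hre, hle⟩, Complex.ext rfl (by simp [him])⟩
      exact ⟨1, by simp, fun x hx => by simpa using hx.2.trans_lt this⟩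
  · exact ⟨Complex.I, by simp, by simp [him]⟩

lemma exists_eventually_le_re_mul_inv_sub_ofReal (hz₀ : z₀ ∉ segIcc) :
    ∃ u : ℂ, ‖u‖ = 1 ∧ ∃ κ > 0, ∀ᶠ z in 𝓝 z₀,
      ∀ x ∈ Set.Icc (-1 : ℝ) 1, κ ≤ (u * (z - (x : ℂ))⁻¹).re := by
  obtain ⟨u, hu, hpos⟩ := exists_forall_re_mul_inv_sub_ofReal_pos hz₀
  obtain ⟨κ, hκ, hle⟩ := isCompact_Icc.exists_forall_le' (Complex.continuous_re.comp_continuousOn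
    (continuousOn_const.mul (continuousOn_inv_sub_ofReal hz₀))) hpos
  refine ⟨u, hu, κ / 2, half_pos hκ, isCompact_Icc.eventually_forall_of_forall_eventually
    fun x hx => ?_⟩
  have hcont : ContinuousAt (fun y : ℂ × ℝ => (u * (y.1 - (y.2 : ℂ))⁻¹).re) (z₀, x) :=
    Complex.continuous_re.continuousAt.comp
      (continuousAt_const.mul (continuousAt_inv_sub_ofReal hz₀ hx))
  exact hcont.eventually_const_le ((half_lt_self hκ).trans_le (hle x hx))

lemma exists_polynomial_norm_inv_sub_ofReal_sub_le (hz : z ∉ segIcc) {ε : ℝ} (hε : 0 < ε) :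
    ∃ t : ℂ[X], ∀ x ∈ Set.Icc (-1 : ℝ) 1, ‖(z - (x : ℂ))⁻¹ - t.eval (x : ℂ)‖ ≤ ε := by
  have hcont := continuousOn_inv_sub_ofReal hz
  obtain ⟨p, hp⟩ := exists_polynomial_near_of_continuousOn (-1) 1 _
    (Complex.continuous_re.comp_continuousOn hcont) (ε / 2) (half_pos hε)
  obtain ⟨q, hq⟩ := exists_polynomial_near_of_continuousOn (-1) 1 _
    (Complex.continuous_im.comp_continuousOn hcont) (ε / 2) (half_pos hε)
  refine ⟨p.map (algebraMap ℝ ℂ) + C Complex.I * q.map (algebraMap ℝ ℂ), fun x hx => ?_⟩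
  rw [eval_add, eval_mul, eval_C, eval_map_algebraMap, eval_map_algebraMap,
    aeval_ofReal_complex, aeval_ofReal_complex]
  refine (Complex.norm_le_abs_re_add_abs_im _).trans ?_
  have hre := hp x hx
  have him := hq x hx
  rw [abs_sub_comm] at hre him
  simp only [Function.comp_apply] at hre him
  simp only [Complex.sub_re, Complex.sub_im, Complex.add_re, Complex.add_im, Complex.mul_re,
    Complex.mul_im, Complex.I_re, Complex.I_im, Complex.ofReal_re, Complex.ofReal_im, zero_mul,
    one_mul, mul_zero, sub_zero, add_zero, zero_add]
  linarith

lemma assocFun_eq_aeval_mul_markovHat_sub (w q p : ℝ[X]) (hz : z ∉ segIcc) :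
    assocFun μ w q p z = aeval z p * markovHat μ w q z - markovHat μ w (p * q) z := by
  have hint (f : ℝ[X]) :
      IntegrableOn (fun x : ℝ => ((f.eval x : ℝ) : ℂ) / (z - (x : ℂ))) (Set.Icc (-1) 1) μ := by
    simpa only [div_eq_mul_inv, Function.comp_apply] using integrableOn_mul_inv_sub_ofReal hz
      (Complex.continuous_ofReal.comp f.continuous)
  simp only [assocFun, markovHat, ← eval_mul]
  rw [← integral_const_mul, ← integral_sub ((hint _).const_mul _) (hint _)]
  refine integral_congr_ae (Eventually.of_forall fun x => ?_)
  simp only [eval_mul, Complex.ofReal_mul]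
  ring

lemma IsMonicOrthogonal.aeval_mul_markovHat (hP : IsMonicOrthogonal (polyIntegral μ) n P)
    (hz : z ∉ segIcc) :
    aeval z P * markovHat μ 1 P z = markovHat μ 1 (P * P) z := by
  rw [← sub_eq_zero, ← assocFun_eq_aeval_mul_markovHat_sub 1 P P hz]
  let PC : ℂ[X] := P.map (algebraMap ℝ ℂ)
  have hPC : PC ≠ 0 := (hP.monic.map _).ne_zero
  have hdeg : (PC /ₘ (X - C z)).degree < n := by
    refine (degree_divByMonic_lt _ _ hPC (by simp)).trans_eq ?_
    rw [degree_map, degree_eq_natDegree hP.monic.ne_zero, hP.natDegree_eq]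
  have hdiv (x : ℝ) : (x - z) * (PC /ₘ (X - C z)).eval (x : ℂ) =
      ((P.eval x : ℝ) : ℂ) - aeval z P := by
    have h := congrArg (eval (x : ℂ)) (X_sub_C_mul_divByMonic_eq_sub_modByMonic PC z)
    simpa [PC, modByMonic_X_sub_C_eq_C_eval, aeval_ofReal_complex] using h
  rw [← hP.integral_eval_mul_eval_eq_zero hdeg]
  refine setIntegral_congr_fun measurableSet_Icc fun x hx => ?_
  have hne := sub_ofReal_ne_zero hz hx
  simp only [eval_one, mul_one]
  rw [← neg_sub _ (aeval z P), ← hdiv x, mul_comm]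
  congr 1
  field_simp
  ring

lemma exists_eventually_mul_polyIntegral_le_norm_markovHat (μ : Measure ℝ)
    [IsFiniteMeasureOnCompacts μ] (hz₀ : z₀ ∉ segIcc) :
    ∃ κ > 0, ∀ᶠ z in 𝓝 z₀, ∀ p : ℝ[X], (∀ x ∈ Set.Icc (-1 : ℝ) 1, 0 ≤ p.eval x) →
      κ * polyIntegral μ p ≤ ‖markovHat μ 1 p z‖ := by
  obtain ⟨u, hu, κ, hκ, hre⟩ := exists_eventually_le_re_mul_inv_sub_ofReal hz₀
  refine ⟨κ, hκ, ?_⟩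
  filter_upwards [hre, isClosed_segIcc.isOpen_compl.mem_nhds hz₀] with z hre hz p hp
  let f (x : ℝ) : ℂ := u * ((p.eval x : ℝ) : ℂ) * (z - (x : ℂ))⁻¹
  have hf : IntegrableOn f (Set.Icc (-1) 1) μ :=
    integrableOn_mul_inv_sub_ofReal hz (by fun_prop)
  have hle : ∀ x ∈ Set.Icc (-1 : ℝ) 1, κ * p.eval x ≤ (f x).re := fun x hx => by
    have hfx : f x = ((p.eval x : ℝ) : ℂ) * (u * (z - (x : ℂ))⁻¹) := by ring
    rw [hfx, Complex.re_ofReal_mul, mul_comm]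
    exact mul_le_mul_of_nonneg_left (hre x hx) (hp x hx)
  calc κ * polyIntegral μ p = ∫ x in Set.Icc (-1 : ℝ) 1, κ * p.eval x ∂μ :=
        (integral_const_mul _ _).symm
    _ ≤ ∫ x in Set.Icc (-1 : ℝ) 1, (f x).re ∂μ :=
        setIntegral_mono_on ((integrableOn_eval μ p).const_mul κ) hf.re measurableSet_Icc hle
    _ = (∫ x in Set.Icc (-1 : ℝ) 1, f x ∂μ).re := integral_re hf
    _ = (u * markovHat μ 1 p z).re := by
        simp only [f, markovHat, eval_one, mul_one, div_eq_mul_inv, mul_assoc, integral_const_mul]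
    _ ≤ ‖markovHat μ 1 p z‖ := by
        simpa only [norm_mul, hu, one_mul] using Complex.re_le_norm (u * markovHat μ 1 p z)

lemma exists_eventually_norm_markovHat_mul_le (hL : PosDefFunctional (polyIntegral μ))
    (w q : ℝ[X]) (hz₀ : z₀ ∉ segIcc) :
    ∃ B : ℝ, ∀ᶠ z in 𝓝 z₀, ∀ p : ℝ[X],
      ‖markovHat μ w (p * q) z‖ ≤ B * momentNorm (polyIntegral μ) p := by
  obtain ⟨δ, hδ, hdist⟩ := exists_eventually_le_norm_sub hz₀
  obtain ⟨M, hM⟩ := isCompact_Icc.exists_bound_of_continuousOn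
    (s := Set.Icc (-1 : ℝ) 1) (q * w).continuous.continuousOn
  refine ⟨M * δ⁻¹ * (1 + polyIntegral μ 1), ?_⟩
  filter_upwards [hdist] with z hdist p
  have hkernel : ∀ x ∈ Set.Icc (-1 : ℝ) 1,
      ‖(((q * w).eval x : ℝ) : ℂ) * (z - (x : ℂ))⁻¹‖ ≤ M * δ⁻¹ := fun x hx => by
    rw [norm_mul, norm_inv, Complex.norm_real]
    exact mul_le_mul (hM x hx) (inv_anti₀ hδ (hdist x hx)) (by positivity)
      ((norm_nonneg _).trans (hM x hx))
  have hfactor : markovHat μ w (p * q) z = ∫ x in Set.Icc (-1 : ℝ) 1,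
      ((p.eval x : ℝ) : ℂ) * ((((q * w).eval x : ℝ) : ℂ) * (z - (x : ℂ))⁻¹) ∂μ := by
    simp only [markovHat, eval_mul, Complex.ofReal_mul, div_eq_mul_inv, mul_assoc]
  exact hfactor ▸ norm_integral_eval_mul_le hL p hkernel

lemma isLittleO_markovHat_momentNorm (hL : PosDefFunctional (polyIntegral μ)) {P : ℕ → ℝ[X]}
    (hP : ∀ n, IsMonicOrthogonal (polyIntegral μ) n (P n)) (hz₀ : z₀ ∉ segIcc) :
    (fun p : ℕ × ℂ => markovHat μ 1 (P p.1) p.2) =o[atTop ×ˢ 𝓝 z₀]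
      fun p => momentNorm (polyIntegral μ) (P p.1) := by
  have hmass : 0 ≤ polyIntegral μ 1 := by simpa using hL.map_sq_nonneg 1
  refine Asymptotics.IsLittleO.of_bound fun ε hε => ?_
  let ε' := ε / (1 + polyIntegral μ 1) / 2
  have hε' : 0 < ε' := by positivity
  obtain ⟨t, ht⟩ := exists_polynomial_norm_inv_sub_ofReal_sub_le hz₀ hε'
  filter_upwards [prod_mem_prod (Ioi_mem_atTop t.natDegree)
    (inter_mem (eventually_norm_inv_sub_ofReal_sub_lt hz₀ hε')
      (isClosed_segIcc.isOpen_compl.mem_nhds hz₀))] with ⟨n, z⟩ ⟨hn, hclose, hz⟩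
  have hkernel : ∀ x ∈ Set.Icc (-1 : ℝ) 1, ‖(z - (x : ℂ))⁻¹ - t.eval (x : ℂ)‖ ≤ ε' + ε' :=
    fun x hx => (norm_sub_le_norm_sub_add_norm_sub _ (z₀ - (x : ℂ))⁻¹ _).trans
      (add_le_add (hclose x hx).le (ht x hx))
  have horth := (hP n).integral_eval_mul_eval_eq_zero
    (degree_le_natDegree.trans_lt (Nat.cast_lt.2 hn))
  have hsub : markovHat μ 1 (P n) z = ∫ x in Set.Icc (-1 : ℝ) 1,
      (((P n).eval x : ℝ) : ℂ) * ((z - (x : ℂ))⁻¹ - t.eval (x : ℂ)) ∂μ := by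
    simp only [mul_sub]
    rw [integral_sub (integrableOn_mul_inv_sub_ofReal hz (by fun_prop))
      (Continuous.integrableOn_Icc (by fun_prop)), horth, sub_zero]
    simp only [markovHat, eval_one, mul_one, div_eq_mul_inv]
  rw [hsub, Real.norm_of_nonneg (momentNorm_nonneg _ _)]
  refine (norm_integral_eval_mul_le hL (P n) hkernel).trans_eq ?_
  rw [add_halves, div_mul_cancel₀ _ (by positivity)]

-- `P(z) ∫ P / (z - x) = ∫ P² / (z - x)` has modulus at least a multiple of `‖P‖²`, while the
-- integral on the left is `o(‖P‖)`: it annihilates the polynomials approximating the kernel.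
lemma isLittleO_momentNorm_aeval (hL : PosDefFunctional (polyIntegral μ)) {P : ℕ → ℝ[X]}
    (hP : ∀ n, IsMonicOrthogonal (polyIntegral μ) n (P n)) (hz₀ : z₀ ∉ segIcc) :
    (fun p : ℕ × ℂ => momentNorm (polyIntegral μ) (P p.1)) =o[atTop ×ˢ 𝓝 z₀]
      fun p => aeval p.2 (P p.1) := by
  obtain ⟨κ, hκ, hlower⟩ := exists_eventually_mul_polyIntegral_le_norm_markovHat μ hz₀
  refine Asymptotics.IsLittleO.of_bound fun ε hε => ?_
  filter_upwards [(isLittleO_markovHat_momentNorm hL hP hz₀).bound (mul_pos hε hκ),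
    tendsto_snd.eventually hlower,
    tendsto_snd.eventually (isClosed_segIcc.isOpen_compl.mem_nhds hz₀)]
    with ⟨n, z⟩ hsmall hlower hz
  set s := momentNorm (polyIntegral μ) (P n)
  have hs : 0 < s := hL.momentNorm_pos (hP n).monic.ne_zero
  rw [Real.norm_of_nonneg hs.le] at hsmall ⊢
  have hchain : κ * s * s ≤ κ * s * (ε * ‖aeval z (P n)‖) :=
    calc κ * s * s = κ * polyIntegral μ (P n * P n) := by
          rw [← sq (P n), ← hL.sq_momentNorm, mul_assoc, ← sq]
      _ ≤ ‖markovHat μ 1 (P n * P n) z‖ :=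
          hlower _ fun x _ => by rw [eval_mul]; exact mul_self_nonneg _
      _ = ‖aeval z (P n)‖ * ‖markovHat μ 1 (P n) z‖ := by
          rw [← (hP n).aeval_mul_markovHat hz, norm_mul]
      _ ≤ ‖aeval z (P n)‖ * (ε * κ * s) := mul_le_mul_of_nonneg_left hsmall (norm_nonneg _)
      _ = κ * s * (ε * ‖aeval z (P n)‖) := by ring
  exact le_of_mul_le_mul_left hchain (by positivity)

lemma isLittleO_momentNorm_sub_aeval (hL : PosDefFunctional (polyIntegral μ)) {P : ℕ → ℝ[X]}
    (hP : ∀ n, IsMonicOrthogonal (polyIntegral μ) n (P n)) (hz₀ : z₀ ∉ segIcc) (D : ℕ) :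
    (fun p : ℕ × ℂ => momentNorm (polyIntegral μ) (P (p.1 - D))) =o[atTop ×ˢ 𝓝 z₀]
      fun p => aeval p.2 (P p.1) := by
  have hshift : Tendsto (fun p : ℕ × ℂ => (p.1 - D, p.2)) (atTop ×ˢ 𝓝 z₀) (atTop ×ˢ 𝓝 z₀) :=
    (tendsto_sub_atTop_nat D).prodMap tendsto_id
  refine ((isLittleO_momentNorm_aeval hL hP hz₀).comp_tendsto hshift).trans_isBigO ?_
  obtain ⟨δ, hδ, hdist⟩ := exists_eventually_le_norm_sub hz₀
  refine Asymptotics.IsBigO.of_bound (δ⁻¹ ^ D) ?_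
  filter_upwards [prod_mem_prod (Ici_mem_atTop D) hdist] with ⟨n, z⟩ ⟨hn, hdist⟩
  have h := norm_aeval_le_norm_aeval_add hP hL nonnegOnIcc_polyIntegral hδ hdist (n - D) D
  rwa [Nat.sub_add_cancel hn] at h

end Markov

/-! ### Extremality of the Sobolev orthogonal polynomials -/

section Sobolev

variable {μ : Measure ℝ} {N n : ℕ} {c : Fin N → ℝ} {d : Fin N → ℕ} {η : Fin N → ℝ} {S f : ℝ[X]}

lemma sobInner_comm (f g : ℝ[X]) : sobInner μ c d η f g = sobInner μ c d η g f := by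
  simp only [sobInner, mul_comm, mul_left_comm, mul_assoc]

variable [IsFiniteMeasureOnCompacts μ]

/-- The discrete Sobolev inner product `sobInner` as a bilinear form. -/
def sobForm (μ : Measure ℝ) [IsFiniteMeasureOnCompacts μ] (c : Fin N → ℝ) (d : Fin N → ℕ)
    (η : Fin N → ℝ) : LinearMap.BilinForm ℝ ℝ[X] :=
  (LinearMap.mul ℝ ℝ[X]).compr₂ (polyIntegral μ) +
    ∑ j, η j • LinearMap.BilinForm.linMulLin (derivEval (d j) (c j)) (derivEval (d j) (c j))

lemma sobForm_apply (f g : ℝ[X]) : sobForm μ c d η f g = sobInner μ c d η f g := by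
  simp [sobForm, sobInner, polyIntegral_apply, derivEval_apply, ← mul_assoc]

lemma sobInner_self (f : ℝ[X]) : sobInner μ c d η f f =
    polyIntegral μ (f ^ 2) + ∑ j, η j * (derivative^[d j] f).eval (c j) ^ 2 := by
  simp only [sobInner, polyIntegral_apply, eval_mul, sq, mul_assoc]

lemma polyIntegral_sq_le_sobInner_self (hη : ∀ j, 0 ≤ η j) (f : ℝ[X]) :
    polyIntegral μ (f ^ 2) ≤ sobInner μ c d η f f := by
  rw [sobInner_self]
  exact le_add_of_nonneg_right (Finset.sum_nonneg fun j _ => mul_nonneg (hη j) (sq_nonneg _))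

lemma mul_sq_eval_iterate_derivative_le_sobInner_self (hL : PosDefFunctional (polyIntegral μ))
    (hη : ∀ j, 0 ≤ η j) (f : ℝ[X]) (j : Fin N) :
    η j * (derivative^[d j] f).eval (c j) ^ 2 ≤ sobInner μ c d η f f := by
  rw [sobInner_self]
  refine le_add_of_nonneg_of_le (hL.map_sq_nonneg f) ?_
  exact Finset.single_le_sum (f := fun i => η i * (derivative^[d i] f).eval (c i) ^ 2)
    (fun i _ => mul_nonneg (hη i) (sq_nonneg _)) (Finset.mem_univ j)

lemma VanishesAtMasses.sobInner_eq (hf : VanishesAtMasses c d f) (g : ℝ[X]) :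
    sobInner μ c d η f g = polyIntegral μ (f * g) := by
  simp [sobInner, hf _, polyIntegral_apply]

/-- `S` is the `n`-th monic orthogonal polynomial of the discrete Sobolev inner product. -/
structure IsMonicSobolevOrthogonal (μ : Measure ℝ) (c : Fin N → ℝ) (d : Fin N → ℕ)
    (η : Fin N → ℝ) (n : ℕ) (S : ℝ[X]) : Prop where
  monic : S.Monic
  natDegree_eq : S.natDegree = n
  sobInner_X_pow : ∀ m < n, sobInner μ c d η (X ^ m) S = 0

namespace IsMonicSobolevOrthogonal

lemma sobInner_eq_zero (hS : IsMonicSobolevOrthogonal μ c d η n S) (hf : f.degree < n) :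
    sobInner μ c d η f S = 0 := by
  have h := map_eq_zero_of_map_X_pow_eq_zero ((sobForm μ c d η).flip S) (n := n)
    (fun m hm => by rw [LinearMap.BilinForm.flip_apply, sobForm_apply, hS.sobInner_X_pow m hm]) hf
  rwa [LinearMap.BilinForm.flip_apply, sobForm_apply] at h

lemma polyIntegral_mul_eq_zero (hS : IsMonicSobolevOrthogonal μ c d η n S) (hf : f.degree < n)
    (hfm : VanishesAtMasses c d f) : polyIntegral μ (f * S) = 0 := by
  rw [← hfm.sobInner_eq (η := η), hS.sobInner_eq_zero hf]

lemma sobInner_self_le (hS : IsMonicSobolevOrthogonal μ c d η n S)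
    (hL : PosDefFunctional (polyIntegral μ)) (hη : ∀ j, 0 ≤ η j) (hf : f.Monic)
    (hfdeg : f.natDegree = n) : sobInner μ c d η S S ≤ sobInner μ c d η f f := by
  have hdeg : (f - S).degree < n := by
    rw [← hfdeg, ← degree_eq_natDegree hf.ne_zero]
    refine degree_sub_lt_left ?_ hf.ne_zero (hf.trans hS.monic.symm)
    rw [degree_eq_natDegree hf.ne_zero, degree_eq_natDegree hS.monic.ne_zero, hfdeg,
      hS.natDegree_eq]
  have hexpand : sobInner μ c d η f f = sobInner μ c d η S S + sobInner μ c d η (f - S) S +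
      sobInner μ c d η S (f - S) + sobInner μ c d η (f - S) (f - S) := by
    simp only [← sobForm_apply, map_sub, LinearMap.sub_apply]
    ring
  have hnonneg : 0 ≤ sobInner μ c d η (f - S) (f - S) :=
    (hL.map_sq_nonneg _).trans (polyIntegral_sq_le_sobInner_self hη _)
  rw [hexpand, sobInner_comm S (f - S), hS.sobInner_eq_zero hdeg]
  linarith

end IsMonicSobolevOrthogonal

lemma exists_polyIntegral_sq_mul_le (μ : Measure ℝ) [IsFiniteMeasureOnCompacts μ] (g : ℝ[X]) :
    ∃ B : ℝ, ∀ p : ℝ[X], polyIntegral μ ((g * p) ^ 2) ≤ B * polyIntegral μ (p ^ 2) := by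
  obtain ⟨B, hB⟩ := isCompact_Icc.exists_bound_of_continuousOn
    (s := Set.Icc (-1 : ℝ) 1) (g ^ 2).continuous.continuousOn
  refine ⟨B, fun p => ?_⟩
  rw [← smul_eq_mul B, ← map_smul, ← sub_nonneg, ← map_sub]
  refine nonnegOnIcc_polyIntegral _ fun x hx => ?_
  simp only [eval_sub, eval_smul, eval_pow, eval_mul, smul_eq_mul, mul_pow, ← sub_mul]
  refine mul_nonneg (sub_nonneg.2 ?_) (sq_nonneg _)
  simpa using (le_abs_self _).trans (hB x hx)

variable {S P : ℕ → ℝ[X]}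

-- `massPoly * P (n - D)` is a competitor in the extremal problem without mass contributions.
lemma isBigO_sobInner_self (hL : PosDefFunctional (polyIntegral μ)) (hη : ∀ j, 0 ≤ η j)
    (hS : ∀ n, IsMonicSobolevOrthogonal μ c d η n (S n))
    (hP : ∀ n, IsMonicOrthogonal (polyIntegral μ) n (P n)) :
    (fun n => sobInner μ c d η (S n) (S n)) =O[atTop]
      fun n => momentNorm (polyIntegral μ) (P (n - (massPoly c d).natDegree)) ^ 2 := by
  set D := (massPoly c d).natDegree
  obtain ⟨B, hB⟩ := exists_polyIntegral_sq_mul_le μ (massPoly c d)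
  refine Asymptotics.IsBigO.of_bound B ?_
  filter_upwards [eventually_ge_atTop D] with n hn
  have hPn := hP (n - D)
  have hdeg : (massPoly c d * P (n - D)).natDegree = n := by
    rw [massPoly_monic.natDegree_mul hPn.monic, hPn.natDegree_eq]
    exact Nat.add_sub_cancel' hn
  have hnonneg : 0 ≤ sobInner μ c d η (S n) (S n) :=
    (hL.map_sq_nonneg _).trans (polyIntegral_sq_le_sobInner_self hη _)
  calc ‖sobInner μ c d η (S n) (S n)‖ = sobInner μ c d η (S n) (S n) :=
        Real.norm_of_nonneg hnonneg
    _ ≤ sobInner μ c d η (massPoly c d * P (n - D)) (massPoly c d * P (n - D)) :=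
        (hS n).sobInner_self_le hL hη (massPoly_monic.mul hPn.monic) hdeg
    _ = polyIntegral μ ((massPoly c d * P (n - D)) ^ 2) := by
        rw [(vanishesAtMasses_massPoly_mul _).sobInner_eq, sq]
    _ ≤ B * polyIntegral μ (P (n - D) ^ 2) := hB _
    _ = B * ‖momentNorm (polyIntegral μ) (P (n - D)) ^ 2‖ := by
        rw [Real.norm_of_nonneg (sq_nonneg _), hL.sq_momentNorm]

lemma isBigO_momentNorm_sobolev (hL : PosDefFunctional (polyIntegral μ)) (hη : ∀ j, 0 ≤ η j)
    (hS : ∀ n, IsMonicSobolevOrthogonal μ c d η n (S n))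
    (hP : ∀ n, IsMonicOrthogonal (polyIntegral μ) n (P n)) :
    (fun n => momentNorm (polyIntegral μ) (S n)) =O[atTop]
      fun n => momentNorm (polyIntegral μ) (P (n - (massPoly c d).natDegree)) := by
  refine Asymptotics.IsBigO.of_pow two_ne_zero
    (Asymptotics.IsBigO.trans (.of_bound' ?_) (isBigO_sobInner_self hL hη hS hP))
  refine Eventually.of_forall fun n => ?_
  rw [Pi.pow_apply, hL.sq_momentNorm]
  exact abs_le_abs_of_nonneg (hL.map_sq_nonneg _) (polyIntegral_sq_le_sobInner_self hη _)

lemma isBigO_eval_iterate_derivative_sobolev (hL : PosDefFunctional (polyIntegral μ))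
    (hη : ∀ j, 0 < η j) (hS : ∀ n, IsMonicSobolevOrthogonal μ c d η n (S n))
    (hP : ∀ n, IsMonicOrthogonal (polyIntegral μ) n (P n)) (j : Fin N) :
    (fun n => (derivative^[d j] (S n)).eval (c j)) =O[atTop]
      fun n => momentNorm (polyIntegral μ) (P (n - (massPoly c d).natDegree)) := by
  refine Asymptotics.IsBigO.of_pow two_ne_zero
    (Asymptotics.IsBigO.trans (.of_bound (η j)⁻¹ ?_)
      (isBigO_sobInner_self hL (fun j => (hη j).le) hS hP))
  refine Eventually.of_forall fun n => ?_
  rw [Pi.pow_apply, Real.norm_of_nonneg (sq_nonneg _), ← div_eq_inv_mul, le_div_iff₀' (hη j)]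
  exact (mul_sq_eval_iterate_derivative_le_sobInner_self hL (fun j => (hη j).le) _ j).trans
    (Real.le_norm_self _)

end Sobolev

/-! ### Polynomials with roots away from a point -/

section FarRoots

open Asymptotics

lemma iterate_derivative_X_sub_C_mul {R : Type*} [CommRing R] (a : R) (p : R[X]) (k : ℕ) :
    derivative^[k] ((X - C a) * p) =
      (X - C a) * derivative^[k] p + k • derivative^[k - 1] p := by
  rw [sub_mul, mul_comm X p, iterate_derivative_sub, iterate_derivative_mul_X,
    iterate_derivative_C_mul]
  ring

section NormedField

variable {𝕜 : Type*} [NormedField 𝕜] {s : Multiset 𝕜} {z : 𝕜} {ε : ℝ}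

lemma pow_card_le_norm_eval_prod_X_sub_C (hε : 0 ≤ ε) (hs : ∀ a ∈ s, ε ≤ ‖z - a‖) :
    ε ^ s.card ≤ ‖(s.map fun a => X - C a).prod.eval z‖ := by
  induction s using Multiset.induction_on with
  | empty => simp
  | cons a s ih =>
    rw [Multiset.forall_mem_cons] at hs
    rw [Multiset.map_cons, Multiset.prod_cons, Multiset.card_cons, eval_mul, norm_mul, pow_succ']
    refine mul_le_mul ?_ (ih hs.2) (by positivity) (norm_nonneg _)
    simpa using hs.1

lemma norm_eval_iterate_derivative_prod_X_sub_C_le (hε : 0 < ε) (hs : ∀ a ∈ s, ε ≤ ‖z - a‖)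
    {k m : ℕ} (hk : k ≤ m) : ‖(derivative^[k] (s.map fun a => X - C a).prod).eval z‖ ≤
      (1 + m / ε) ^ s.card * ‖(s.map fun a => X - C a).prod.eval z‖ := by
  induction s using Multiset.induction_on generalizing k with
  | empty =>
    cases k with
    | zero => simp
    | succ k => simp
  | cons a s ih =>
    rw [Multiset.forall_mem_cons] at hs
    rw [Multiset.map_cons, Multiset.prod_cons, Multiset.card_cons, iterate_derivative_X_sub_C_mul]
    set p := (s.map fun a => X - C a).prod
    set B := (1 + m / ε) ^ s.card * ‖p.eval z‖
    have hm : (m : ℝ) ≤ m / ε * ‖z - a‖ := by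
      rw [div_mul_eq_mul_div, le_div_iff₀ hε]
      exact mul_le_mul_of_nonneg_left hs.1 m.cast_nonneg
    calc ‖((X - C a) * derivative^[k] p + k • derivative^[k - 1] p).eval z‖
        = ‖(z - a) * (derivative^[k] p).eval z + k • (derivative^[k - 1] p).eval z‖ := by simp
      _ ≤ ‖z - a‖ * ‖(derivative^[k] p).eval z‖ + k * ‖(derivative^[k - 1] p).eval z‖ :=
          (norm_add_le _ _).trans (add_le_add (norm_mul_le _ _) (norm_nsmul_le ..))
      _ ≤ ‖z - a‖ * B + m * B := by
          gcongr
          · exact ih hs.2 hk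
          · exact ih hs.2 ((Nat.sub_le k 1).trans hk)
      _ ≤ ‖z - a‖ * B + m / ε * ‖z - a‖ * B := by gcongr
      _ = (1 + m / ε) ^ (s.card + 1) * ‖((X - C a) * p).eval z‖ := by
          simp only [B, eval_mul, eval_sub, eval_X, eval_C, norm_mul]
          ring

end NormedField

variable {ι : Type*} {l : Filter ι} {q r : ι → ℝ[X]} {N : ℕ} {ε : ℝ}

lemma card_aroots_complex (p : ℝ[X]) : (p.aroots ℂ).card = p.natDegree := by
  rw [aroots, ← (IsAlgClosed.splits _).natDegree_eq_card_roots, natDegree_map]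

lemma map_complex_eq_prod_aroots {p : ℝ[X]} (hp : p.Monic) :
    p.map (algebraMap ℝ ℂ) = ((p.aroots ℂ).map fun a => X - C a).prod :=
  (IsAlgClosed.splits _).eq_prod_roots_of_monic (hp.map _)

lemma isBigO_one_aeval_of_far (hr : ∀ i, (r i).Monic) (hrN : ∀ i, (r i).natDegree ≤ N)
    (hε : 0 < ε) {z : ι → ℂ} (hfar : ∀ᶠ i in l, ∀ w ∈ (r i).aroots ℂ, ε ≤ ‖z i - w‖) :
    (fun _ : ι => (1 : ℂ)) =O[l] fun i => aeval (z i) (r i) := by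
  have he : 0 < min 1 ε := lt_min one_pos hε
  refine IsBigO.of_bound ((min 1 ε ^ N)⁻¹) ?_
  filter_upwards [hfar] with i hfar
  have h := pow_card_le_norm_eval_prod_X_sub_C he.le fun a ha =>
    (min_le_right 1 ε).trans (hfar a ha)
  rw [← map_complex_eq_prod_aroots (hr i), eval_map_algebraMap, card_aroots_complex] at h
  rw [norm_one, ← div_eq_inv_mul, one_le_div (by positivity)]
  exact (pow_le_pow_of_le_one he.le (min_le_left 1 ε) (hrN i)).trans h

lemma isBigO_eval_iterate_derivative_of_far (hr : ∀ i, (r i).Monic)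
    (hrN : ∀ i, (r i).natDegree ≤ N) (hε : 0 < ε) {c : ℝ}
    (hfar : ∀ᶠ i in l, ∀ w ∈ (r i).aroots ℂ, ε ≤ ‖(c : ℂ) - w‖) (k : ℕ) :
    (fun i => (derivative^[k] (r i)).eval c) =O[l] fun i => (r i).eval c := by
  refine IsBigO.of_bound ((1 + k / ε) ^ N) ?_
  filter_upwards [hfar] with i hfar
  have h := norm_eval_iterate_derivative_prod_X_sub_C_le hε hfar le_rfl (k := k)
  rw [← map_complex_eq_prod_aroots (hr i), iterate_derivative_map, eval_map_algebraMap,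
    eval_map_algebraMap, aeval_ofReal_complex, aeval_ofReal_complex, Complex.norm_real,
    Complex.norm_real, card_aroots_complex] at h
  refine h.trans ?_
  gcongr
  · exact le_add_of_nonneg_right (by positivity)
  · exact hrN i

variable {I : Set ℝ} {c : ℝ}

lemma isLittleO_eval_iterate_derivative_succ (hI : I.OrdConnected) (hIb : Bornology.IsBounded I)
    (hc : c ∉ I) (hq : ∀ i, AllRootsIn (q i) I)
    (hdeg : Tendsto (fun i => (q i).natDegree) l atTop) (k : ℕ) :
    (fun i => (derivative^[k] (q i)).eval c) =o[l]
      fun i => (derivative^[k + 1] (q i)).eval c := by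
  obtain ⟨M, hM0, hM⟩ := hIb.exists_pos_norm_le
  have hdist : ∀ t ∈ I, |c - t| ≤ |c| + M := fun t ht =>
    (abs_sub c t).trans (add_le_add_right (hM t ht) _)
  refine IsLittleO.of_bound fun ε hε => ?_
  filter_upwards [hdeg.eventually_ge_atTop (k + (⌈(|c| + M) / ε⌉₊ + 1))] with i hi
  have hbound := ((hq i).iterate_derivative hI (by omega : k ≤ _)).natDegree_mul_abs_eval_le hI hc
    (by positivity) hdist
  rw [natDegree_iterate_derivative_eq_sub, ← Function.iterate_succ_apply' derivative k] at hbound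
  have hdegi : (|c| + M) / ε ≤ ((q i).natDegree - k : ℕ) :=
    (Nat.le_ceil _).trans (Nat.cast_le.2 (by omega))
  have hpos : (0 : ℝ) < ((q i).natDegree - k : ℕ) := Nat.cast_pos.2 (by omega)
  rw [div_le_iff₀' hε] at hdegi
  refine le_of_mul_le_mul_left (hbound.trans ?_) hpos
  calc (|c| + M) * |(derivative^[k + 1] (q i)).eval c|
      ≤ ε * ((q i).natDegree - k : ℕ) * |(derivative^[k + 1] (q i)).eval c| := by gcongr
    _ = ((q i).natDegree - k : ℕ) * (ε * ‖(derivative^[k + 1] (q i)).eval c‖) := by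
        rw [Real.norm_eq_abs]; ring

lemma isLittleO_eval_iterate_derivative_of_lt (hI : I.OrdConnected) (hIb : Bornology.IsBounded I)
    (hc : c ∉ I) (hq : ∀ i, AllRootsIn (q i) I)
    (hdeg : Tendsto (fun i => (q i).natDegree) l atTop) {k m : ℕ} (hkm : k < m) :
    (fun i => (derivative^[k] (q i)).eval c) =o[l] fun i => (derivative^[m] (q i)).eval c := by
  induction m, hkm using Nat.le_induction with
  | base => exact isLittleO_eval_iterate_derivative_succ hI hIb hc hq hdeg k
  | succ m _ ih => exact ih.trans (isLittleO_eval_iterate_derivative_succ hI hIb hc hq hdeg m)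

-- Of the Leibniz terms, the one leaving `r` alone dominates.
lemma isEquivalent_eval_iterate_derivative_mul (hI : I.OrdConnected) (hIb : Bornology.IsBounded I)
    (hc : c ∉ I) (hq : ∀ i, AllRootsIn (q i) I)
    (hdeg : Tendsto (fun i => (q i).natDegree) l atTop) (hr : ∀ i, (r i).Monic)
    (hrN : ∀ i, (r i).natDegree ≤ N) (hε : 0 < ε)
    (hfar : ∀ᶠ i in l, ∀ w ∈ (r i).aroots ℂ, ε ≤ ‖(c : ℂ) - w‖) (m : ℕ) :
    (fun i => (derivative^[m] (q i * r i)).eval c) ~[l]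
      fun i => (derivative^[m] (q i)).eval c * (r i).eval c := by
  have hrest : (fun i => ∑ k ∈ Finset.range m, (m.choose (k + 1) : ℝ) *
      ((derivative^[m - (k + 1)] (q i)).eval c * (derivative^[k + 1] (r i)).eval c)) =o[l]
      fun i => (derivative^[m] (q i)).eval c * (r i).eval c := by
    refine IsLittleO.fun_sum fun k hk => IsLittleO.const_mul_left ?_ _
    have hlt : m - (k + 1) < m := Nat.sub_lt (Nat.zero_lt_of_lt (Finset.mem_range.1 hk)) k.succ_pos
    exact (isLittleO_eval_iterate_derivative_of_lt hI hIb hc hq hdeg hlt).mul_isBigO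
      (isBigO_eval_iterate_derivative_of_far hr hrN hε hfar _)
  refine hrest.congr_left fun i => ?_
  simp [iterate_derivative_mul, Finset.sum_range_succ', eval_finsetSum]

lemma isBigO_eval_mul_iterate_derivative (hI : I.OrdConnected) (hIb : Bornology.IsBounded I)
    (hc : c ∉ I) (hq : ∀ i, AllRootsIn (q i) I)
    (hdeg : Tendsto (fun i => (q i).natDegree) l atTop) (hr : ∀ i, (r i).Monic)
    (hrN : ∀ i, (r i).natDegree ≤ N) (hε : 0 < ε)
    (hfar : ∀ᶠ i in l, ∀ w ∈ (r i).aroots ℂ, ε ≤ ‖(c : ℂ) - w‖) (m : ℕ) :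
    (fun i => (q i * r i).eval c) =O[l] fun i => (derivative^[m] (q i * r i)).eval c := by
  have hqm : (fun i => (q i).eval c) =O[l] fun i => (derivative^[m] (q i)).eval c := by
    rcases m.eq_zero_or_pos with rfl | hm
    · exact isBigO_refl _ _
    · exact (isLittleO_eval_iterate_derivative_of_lt hI hIb hc hq hdeg hm).isBigO
  simp only [eval_mul]
  exact (hqm.mul (isBigO_refl _ _)).trans
    (isEquivalent_eval_iterate_derivative_mul hI hIb hc hq hdeg hr hrN hε hfar m).isBigO_symm

end FarRoots

/-! ### Lower bounds for the Sobolev orthogonal polynomials -/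

section Lower

open Asymptotics Topology

namespace DominatingFactorization

variable {ι : Type*} {l : Filter ι} {N : ℕ} {P S q r : ι → ℝ[X]} {ε : ℝ}

lemma isBigO_aeval (hF : ∀ i, DominatingFactorization N (P i) (S i) (q i) (r i)) {z : ι → ℂ}
    {z₀ : ℂ} (hz₀ : z₀ ∉ segIcc) (hz : Tendsto z l (𝓝 z₀)) (hε : 0 < ε)
    (hfar : ∀ᶠ i in l, ∀ w ∈ (r i).aroots ℂ, ε ≤ ‖z i - w‖) :
    (fun i => aeval (z i) (P i)) =O[l] fun i => aeval (z i) (S i) := by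
  obtain ⟨δ, hδ, hdist⟩ := exists_eventually_le_norm_sub hz₀
  have hPq : (fun i => aeval (z i) (P i)) =O[l] fun i => aeval (z i) (q i) := by
    refine IsBigO.of_bound (Real.exp (2 / δ) * (‖z₀‖ + 1 + 1) ^ N) ?_
    filter_upwards [hz.eventually hdist, hz.norm.eventually_le_const (lt_add_one ‖z₀‖)]
      with i hdist hnorm
    exact ((hF i).norm_aeval_le δ hδ (z i) hdist).trans (by gcongr)
  have h1r := isBigO_one_aeval_of_far (fun i => (hF i).monic_right)
    (fun i => (hF i).natDegree_right_le) hε hfar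
  simpa [(hF _).eq_mul] using hPq.mul h1r

lemma tendsto_natDegree_left {P S q r : ℕ → ℝ[X]}
    (hF : ∀ n, DominatingFactorization N (P n) (S n) (q n) (r n))
    (hS : ∀ n, (S n).natDegree = n) : Tendsto (fun n => (q n).natDegree) atTop atTop := by
  refine tendsto_atTop_mono (fun n => ?_) (tendsto_sub_atTop_nat N)
  have hdeg := hS n
  rw [(hF n).eq_mul, natDegree_mul (hF n).allRootsIn.ne_zero (hF n).monic_right.ne_zero] at hdeg
  have := (hF n).natDegree_right_le
  omega

end DominatingFactorization

variable {μ : Measure ℝ} [IsFiniteMeasureOnCompacts μ] {N : ℕ} {c : Fin N → ℝ} {d : Fin N → ℕ}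
  {η : Fin N → ℝ} {P S q r : ℕ → ℝ[X]}

lemma ofReal_notMem_segIcc {x : ℝ} (hx : x ∉ Set.Icc (-1 : ℝ) 1) : (x : ℂ) ∉ segIcc := by
  rintro ⟨y, hy, hyx⟩
  exact hx (Complex.ofReal_injective hyx ▸ hy)

lemma isBigO_aeval_momentNorm_of_far (hL : PosDefFunctional (polyIntegral μ))
    (hη : ∀ j, 0 < η j) (hS : ∀ n, IsMonicSobolevOrthogonal μ c d η n (S n))
    (hP : ∀ n, IsMonicOrthogonal (polyIntegral μ) n (P n))
    (hF : ∀ n, DominatingFactorization N (P n) (S n) (q n) (r n)) {j : Fin N}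
    (hc : c j ∉ Set.Icc (-1 : ℝ) 1) {ε : ℝ} (hε : 0 < ε) {l : Filter ℕ} (hl : l ≤ atTop)
    (hfar : ∀ᶠ n in l, ∀ w ∈ (r n).aroots ℂ, ε ≤ ‖(c j : ℂ) - w‖) :
    (fun n => aeval (c j : ℂ) (P n)) =O[l]
      fun n => momentNorm (polyIntegral μ) (P (n - (massPoly c d).natDegree)) := by
  have hdeg : Tendsto (fun n => (q n).natDegree) l atTop :=
    (DominatingFactorization.tendsto_natDegree_left hF fun n => (hS n).natDegree_eq).mono_left hl
  calc (fun n => aeval (c j : ℂ) (P n))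
      =O[l] fun n => aeval (c j : ℂ) (S n) :=
        DominatingFactorization.isBigO_aeval hF (ofReal_notMem_segIcc hc) tendsto_const_nhds hε hfar
    _ =O[l] fun n => (S n).eval (c j) :=
        IsBigO.of_bound' (Eventually.of_forall fun n => by
          rw [aeval_ofReal_complex, Complex.norm_real])
    _ =O[l] fun n => (derivative^[d j] (S n)).eval (c j) := by
        simpa only [(hF _).eq_mul] using isBigO_eval_mul_iterate_derivative Set.ordConnected_Icc
          (Metric.isBounded_Icc _ _) hc (fun n => (hF n).allRootsIn) hdeg
          (fun n => (hF n).monic_right) (fun n => (hF n).natDegree_right_le) hε hfar (d j)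
    _ =O[l] fun n => momentNorm (polyIntegral μ) (P (n - (massPoly c d).natDegree)) :=
        (isBigO_eval_iterate_derivative_sobolev hL hη hS hP j).mono hl

-- If roots near `c j` were missing for infinitely many `n`, then along those `n` the value
-- `P n (c j)` would be bounded by a norm which is `o (P n (c j))`.
lemma eventually_exists_mem_aroots_norm_sub_lt (hL : PosDefFunctional (polyIntegral μ))
    (hη : ∀ j, 0 < η j) (hS : ∀ n, IsMonicSobolevOrthogonal μ c d η n (S n))
    (hP : ∀ n, IsMonicOrthogonal (polyIntegral μ) n (P n))
    (hF : ∀ n, DominatingFactorization N (P n) (S n) (q n) (r n)) {j : Fin N}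
    (hc : c j ∉ Set.Icc (-1 : ℝ) 1) {ε : ℝ} (hε : 0 < ε) :
    ∀ᶠ n in atTop, ∃ w ∈ (r n).aroots ℂ, ‖(c j : ℂ) - w‖ < ε := by
  by_contra! hfreq
  let l : Filter ℕ := atTop ⊓ 𝓟 {n | ∀ w ∈ (r n).aroots ℂ, ε ≤ ‖(c j : ℂ) - w‖}
  have : l.NeBot := frequently_mem_iff_neBot.1 hfreq
  have hl : l ≤ atTop := inf_le_left
  have hbound := isBigO_aeval_momentNorm_of_far hL hη hS hP hF hc hε hl
    (mem_inf_of_right (mem_principal_self _))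
  have hsmall := (isLittleO_momentNorm_sub_aeval hL hP (ofReal_notMem_segIcc hc)
    (massPoly c d).natDegree).comp_tendsto
      ((tendsto_id.mono_left hl).prodMk (tendsto_const_nhds (x := (c j : ℂ))))
  refine isLittleO_irrefl (Eventually.of_forall fun n => ?_).frequently
    (hsmall.trans_isBigO hbound)
  exact (hL.momentNorm_pos (hP _).monic.ne_zero).ne'

lemma forall_mem_aroots_exists_norm_sub_lt {p : ℝ[X]} (hdeg : p.natDegree ≤ N) {e : ℝ}
    {c : Fin N → ℂ} (hsep : ∀ i j, i ≠ j → 2 * e ≤ ‖c i - c j‖)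
    (hnear : ∀ j, ∃ w ∈ p.aroots ℂ, ‖c j - w‖ < e) :
    ∀ w ∈ p.aroots ℂ, ∃ j, ‖c j - w‖ < e := by
  choose a ha hae using hnear
  have hinj : Function.Injective a := fun i j hij => by
    by_contra hne
    have htri := norm_sub_le_norm_sub_add_norm_sub (c i) (a i) (c j)
    rw [hij, norm_sub_rev (a j)] at htri
    have hi := hae i
    rw [hij] at hi
    linarith [hsep i j hne, hae j]
  have hle : Finset.univ.val.map a ≤ p.aroots ℂ :=
    (Multiset.le_iff_subset (Finset.univ.nodup.map hinj)).2 fun w hw => by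
      obtain ⟨j, -, rfl⟩ := Multiset.mem_map.1 hw
      exact ha j
  have hcard : (p.aroots ℂ).card ≤ (Finset.univ.val.map a).card := by
    simpa [card_aroots_complex] using hdeg
  intro w hw
  rw [← Multiset.eq_of_le_of_card_le hle hcard] at hw
  obtain ⟨j, -, rfl⟩ := Multiset.mem_map.1 hw
  exact ⟨j, hae j⟩

lemma exists_pos_separation {c : Fin N → ℂ} (hc : Function.Injective c) {z : ℂ}
    (hz : ∀ j, z ≠ c j) :
    ∃ e > 0, (∀ i j, i ≠ j → 2 * e ≤ ‖c i - c j‖) ∧ ∀ j, 3 * e ≤ ‖z - c j‖ := by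
  have hsmall (a : ℝ) {b : ℝ} (hb : 0 < b) : ∀ᶠ e in 𝓝[>] (0 : ℝ), a * e ≤ b :=
    (Continuous.tendsto' (by fun_prop) 0 0 (mul_zero a)).mono_left nhdsWithin_le_nhds
      |>.eventually_le_const hb
  have hsep : ∀ᶠ e in 𝓝[>] (0 : ℝ), ∀ i j, i ≠ j → 2 * e ≤ ‖c i - c j‖ := by
    simp only [eventually_all]
    exact fun i j hij => hsmall 2 (norm_sub_pos_iff.2 (hc.ne hij))
  have hzc : ∀ᶠ e in 𝓝[>] (0 : ℝ), ∀ j, 3 * e ≤ ‖z - c j‖ :=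
    eventually_all.2 fun j => hsmall 3 (norm_sub_pos_iff.2 (hz j))
  obtain ⟨e, he, hsep, hzc⟩ := (eventually_mem_nhdsWithin.and (hsep.and hzc)).exists
  exact ⟨e, he, hsep, hzc⟩

-- The cofactor `r n` has at most `N` roots and one near each `c j`, so it has no others.
lemma isBigO_aeval_sobolev (hL : PosDefFunctional (polyIntegral μ)) (hη : ∀ j, 0 < η j)
    (hc : ∀ j, c j ∉ Set.Icc (-1 : ℝ) 1) (hseq : SeqOrdered c d)
    (hS : ∀ n, IsMonicSobolevOrthogonal μ c d η n (S n))
    (hP : ∀ n, IsMonicOrthogonal (polyIntegral μ) n (P n)) {z₀ : ℂ} (hz₀ : z₀ ∉ segIcc)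
    (hz₀c : ∀ j, z₀ ≠ c j) :
    (fun p : ℕ × ℂ => aeval p.2 (P p.1)) =O[atTop ×ˢ 𝓝 z₀] fun p => aeval p.2 (S p.1) := by
  have hfact (n : ℕ) : ∃ q r, DominatingFactorization N (P n) (S n) q r :=
    hseq.exists_dominatingFactorization hL nonnegOnIcc_polyIntegral (hP n) (hS n).monic
      (hS n).natDegree_eq fun f hf hfm => (hS n).polyIntegral_mul_eq_zero hf hfm
  choose q r hF using hfact
  obtain ⟨e, he, hsep, hz₀e⟩ :=
    exists_pos_separation (Complex.ofReal_injective.comp hseq.injective) hz₀c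
  have hnear : ∀ᶠ n in atTop, ∀ j, ∃ w ∈ (r n).aroots ℂ, ‖(c j : ℂ) - w‖ < e :=
    eventually_all.2 fun j => eventually_exists_mem_aroots_norm_sub_lt hL hη hS hP hF (hc j) he
  refine DominatingFactorization.isBigO_aeval (fun p : ℕ × ℂ => hF p.1) hz₀ tendsto_snd he ?_
  filter_upwards [prod_mem_prod hnear (Metric.ball_mem_nhds z₀ he)] with ⟨n, z⟩ ⟨hn, hz⟩ w hw
  obtain ⟨j, hj⟩ :=
    forall_mem_aroots_exists_norm_sub_lt (hF n).natDegree_right_le hsep hn w hw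
  rw [Metric.mem_ball', dist_eq_norm] at hz
  have htri := norm_sub_le_norm_sub_add_norm_sub z₀ z (c j : ℂ)
  have htri' := norm_sub_le_norm_sub_add_norm_sub z w (c j : ℂ)
  rw [norm_sub_rev w] at htri'
  have := hz₀e j
  simp only [Function.comp_apply] at this hj
  linarith

end Lower

/-! ### Convergence -/

section Convergence

open Asymptotics Topology

variable {μ : Measure ℝ} [IsFiniteMeasureOnCompacts μ] {N : ℕ} {c : Fin N → ℝ} {d : Fin N → ℕ}
  {η : Fin N → ℝ} {S : ℕ → ℝ[X]}

lemma isLittleO_momentNorm_sobolev_aeval (hL : PosDefFunctional (polyIntegral μ))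
    (hη : ∀ j, 0 < η j) (hc : ∀ j, c j ∉ Set.Icc (-1 : ℝ) 1) (hseq : SeqOrdered c d)
    (hS : ∀ n, IsMonicSobolevOrthogonal μ c d η n (S n)) {z₀ : ℂ} (hz₀ : z₀ ∉ segIcc)
    (hz₀c : ∀ j, z₀ ≠ c j) :
    (fun p : ℕ × ℂ => momentNorm (polyIntegral μ) (S p.1)) =o[atTop ×ˢ 𝓝 z₀]
      fun p => aeval p.2 (S p.1) := by
  choose P hP using hL.exists_isMonicOrthogonal
  have hSP := (isBigO_momentNorm_sobolev hL (fun j => (hη j).le) hS hP).comp_tendsto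
    (tendsto_fst (f := atTop) (g := 𝓝 z₀))
  exact (hSP.trans_isLittleO (isLittleO_momentNorm_sub_aeval hL hP hz₀ _)).trans_isBigO
    (isBigO_aeval_sobolev hL hη hc hseq hS hP hz₀ hz₀c)

lemma tendsto_assocFun_div_aeval_sub_markovHat (hL : PosDefFunctional (polyIntegral μ))
    (w q : ℝ[X]) {z₀ : ℂ} (hz₀ : z₀ ∉ segIcc) (hS : ∀ n, S n ≠ 0)
    (hsmall : (fun p : ℕ × ℂ => momentNorm (polyIntegral μ) (S p.1)) =o[atTop ×ˢ 𝓝 z₀]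
      fun p => aeval p.2 (S p.1)) :
    Tendsto (fun p : ℕ × ℂ => markovHat μ w q p.2 -
      assocFun μ w q (S p.1) p.2 / aeval p.2 (S p.1)) (atTop ×ˢ 𝓝 z₀) (𝓝 0) := by
  obtain ⟨B, hB⟩ := exists_eventually_norm_markovHat_mul_le hL w q hz₀
  have hrem : (fun p : ℕ × ℂ => markovHat μ w (S p.1 * q) p.2) =o[atTop ×ˢ 𝓝 z₀]
      fun p => aeval p.2 (S p.1) := by
    refine IsBigO.trans_isLittleO (IsBigO.of_bound B ?_) hsmall
    filter_upwards [tendsto_snd.eventually hB] with p hp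
    rw [Real.norm_of_nonneg (momentNorm_nonneg _ _)]
    exact hp (S p.1)
  refine hrem.tendsto_div_nhds_zero.congr' ?_
  filter_upwards [hsmall.bound one_pos,
    tendsto_snd.eventually (isClosed_segIcc.isOpen_compl.mem_nhds hz₀)] with p hle hz
  have hne : aeval p.2 (S p.1) ≠ 0 := fun h0 => by
    rw [h0, norm_zero, mul_zero, norm_le_zero_iff] at hle
    exact (hL.momentNorm_pos (hS p.1)).ne' hle
  rw [assocFun_eq_aeval_mul_markovHat_sub w q (S p.1) hz]
  field_simp
  ring

end Convergence

theorem statement1_general (μ : Measure ℝ) [IsFiniteMeasureOnCompacts μ]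
    (hμinf : ∀ p : ℝ[X], p ≠ 0 → 0 < ∫ x in Set.Icc (-1 : ℝ) 1, (p.eval x) ^ 2 ∂μ)
    {N : ℕ} (c : Fin N → ℝ) (d : Fin N → ℕ) (hc : ∀ j, c j ∉ Set.Icc (-1 : ℝ) 1)
    (η : Fin N → ℝ) (hη : ∀ j, 0 < η j) (hseq : SeqOrdered c d) (S : ℕ → ℝ[X])
    (hSmonic : ∀ n, (S n).Monic) (hSdeg : ∀ n, (S n).natDegree = n)
    (hSorth : ∀ n, ∀ m < n, sobInner μ c d η (X ^ m) (S n) = 0) (w q : ℝ[X])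
    (K : Set ℂ) (hK : IsCompact K) (hKsub : ∀ z ∈ K, z ∉ segIcc ∧ ∀ j, z ≠ (c j : ℂ)) :
    TendstoUniformlyOn (fun n z => assocFun μ w q (S n) z / aeval z (S n))
      (markovHat μ w q) atTop K := by
  have hL : PosDefFunctional (polyIntegral μ) := fun p hp => by
    simpa only [polyIntegral_apply, eval_pow] using hμinf p hp
  have hS (n : ℕ) : IsMonicSobolevOrthogonal μ c d η n (S n) :=
    ⟨hSmonic n, hSdeg n, hSorth n⟩
  rw [← tendstoLocallyUniformlyOn_iff_tendstoUniformlyOn_of_compact hK,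
    tendstoLocallyUniformlyOn_iff_forall_tendsto]
  intro z₀ hz₀
  obtain ⟨hz₀s, hz₀c⟩ := hKsub z₀ hz₀
  have hsmall := isLittleO_momentNorm_sobolev_aeval hL hη hc hseq hS hz₀s hz₀c
  have hlim := tendsto_assocFun_div_aeval_sub_markovHat hL w q hz₀s (fun n => (hSmonic n).ne_zero)
    hsmall
  rw [uniformity_eq_comap_nhds_zero_swapped, tendsto_comap_iff]
  exact hlim.mono_left (prod_mono_right _ nhdsWithin_le_nhds)

/-- **Extended Markov's Theorem.** For a sequentially-ordered discrete
Sobolev inner product with `μ` in the Nevai class `M(0,1)`, for every `k ≥ 1` the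
rational functions `R_n^{[k]} = S_n^{[k]} / S_{n+k}` converge uniformly on every
compact subset of `(ℂ ∖ [-1,1]) ∖ {c 1, …, c N}` to the `k`-th Markov-type
function of `μ_ρ`. -/
theorem statement1
    (μ : Measure ℝ) [IsFiniteMeasure μ]
    (hμsupp : μ (Set.Icc (-1:ℝ) 1)ᶜ = 0)
    (hμinf : ∀ p : Polynomial ℝ, p ≠ 0 → 0 < ∫ x in Set.Icc (-1:ℝ) 1, (p.eval x) ^ 2 ∂μ)
    {N : ℕ} (c : Fin N → ℝ) (d : Fin N → ℕ)
    (hc : ∀ j, c j ∉ Set.Icc (-1:ℝ) 1)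
    (η : Fin N → ℝ) (hη : ∀ j, 0 < η j)
    (hseq : SeqOrdered c d)
    (S : ℕ → Polynomial ℝ)
    (hSmonic : ∀ n, (S n).Monic) (hSdeg : ∀ n, (S n).natDegree = n)
    (hSorth : ∀ n, ∀ m < n, sobInner μ c d η (X ^ m) (S n) = 0)
    (Q : ℕ → Polynomial ℝ)
    (hQmonic : ∀ n, (Q n).Monic) (hQdeg : ∀ n, (Q n).natDegree = n)
    (hQorth : ∀ n, ∀ m < n,
      (∫ x in Set.Icc (-1:ℝ) 1, x ^ m * (Q n).eval x * (rhoPoly c d).eval x ∂μ) = 0)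
    (hNevai : NevaiClass μ)
    (k : ℕ) (hk : 1 ≤ k)
    (K : Set ℂ) (hK : IsCompact K)
    (hKsub : ∀ z ∈ K, z ∉ segIcc ∧ ∀ j, z ≠ (c j : ℂ)) :
    TendstoUniformlyOn
      (fun (n : ℕ) (z : ℂ) =>
        assocFun μ (rhoPoly c d) (Q (k - 1)) (S (n + k)) z / aeval z (S (n + k)))
      (markovHat μ (rhoPoly c d) (Q (k - 1))) atTop K := by
  have hlim := statement1_general μ hμinf c d hc η hη hseq S hSmonic hSdeg hSorth (rhoPoly c d)
    (Q (k - 1)) K hK hKsub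
  exact fun u hu => (tendsto_add_atTop_nat k).eventually (hlim u hu)

end
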